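/- For every z > 2, |P(W̄ ≤ z) − Φ(z)| ≤ 7115 · e^{−z/2} · (β₂ + β₃). -/

import Mathlib

open MeasureTheory ProbabilityTheory Real

/-- The standard normal cumulative distribution function. -/
noncomputable def Phi (z : ℝ) : ℝ :=
  (Real.sqrt (2 * Real.pi))⁻¹ * ∫ u in Set.Iic z, Real.exp (-u ^ 2 / 2)

/-- The bounded solution `f_z` of the Stein equation
`f'(w) - w f(w) = 1{w ≤ z} - Φ(z)`. -/
noncomputable def fz (z w : ℝ) : ℝ :=
  if w ≤ z then Real.sqrt (2 * Real.pi) * Real.exp (w ^ 2 / 2) * Phi w * (1 - Phi z)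
  else Real.sqrt (2 * Real.pi) * Real.exp (w ^ 2 / 2) * Phi z * (1 - Phi w)

/-- The derivative `f_z'`, expressed via the Stein equation. -/
noncomputable def fz' (z w : ℝ) : ℝ :=
  w * fz z w + (if w ≤ z then 1 else 0) - Phi z

/-- The truncation `x̄ᵢ = ξᵢ 1{ξᵢ ≤ 1}`. -/
noncomputable def xbar {Ω : Type*} {n : ℕ} (ξ : Fin n → Ω → ℝ) (i : Fin n) (ω : Ω) : ℝ :=
  if ξ i ω ≤ 1 then ξ i ω else 0

/-- `W̄ = ∑ᵢ x̄ᵢ`. -/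
noncomputable def Wbar {Ω : Type*} {n : ℕ} (ξ : Fin n → Ω → ℝ) (ω : Ω) : ℝ :=
  ∑ i, xbar ξ i ω

/-- `W̄⁽ⁱ⁾ = W̄ - x̄ᵢ`. -/
noncomputable def Wbari {Ω : Type*} {n : ℕ} (ξ : Fin n → Ω → ℝ) (i : Fin n) (ω : Ω) : ℝ :=
  Wbar ξ ω - xbar ξ i ω

/-- `K̄ᵢ(t) = E[x̄ᵢ (1{0 ≤ t ≤ x̄ᵢ} - 1{x̄ᵢ ≤ t < 0})]`. -/
noncomputable def Kbar {Ω : Type*} [MeasureSpace Ω] {n : ℕ} (ξ : Fin n → Ω → ℝ)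
    (i : Fin n) (t : ℝ) : ℝ :=
  ∫ ω, xbar ξ i ω * ((if 0 ≤ t ∧ t ≤ xbar ξ i ω then (1 : ℝ) else 0)
    - (if xbar ξ i ω ≤ t ∧ t < 0 then (1 : ℝ) else 0))

/-- `β₂ = ∑ᵢ E[ξᵢ² 1{|ξᵢ| > 1}]`. -/
noncomputable def beta2 {Ω : Type*} [MeasureSpace Ω] {n : ℕ} (ξ : Fin n → Ω → ℝ) : ℝ :=
  ∑ i, ∫ ω, (if 1 < |ξ i ω| then (ξ i ω) ^ 2 else 0)

/-- `β₃ = ∑ᵢ E[|ξᵢ|³ 1{|ξᵢ| ≤ 1}]`. -/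
noncomputable def beta3 {Ω : Type*} [MeasureSpace Ω] {n : ℕ} (ξ : Fin n → Ω → ℝ) : ℝ :=
  ∑ i, ∫ ω, (if |ξ i ω| ≤ 1 then |ξ i ω| ^ 3 else 0)


/-! ## Gaussian facts -/

lemma sqh_deriv (u : ℝ) : HasDerivAt (fun u : ℝ => -u ^ 2 / 2) (-u) u :=
  (((hasDerivAt_pow 2 u).neg).div_const 2).congr_deriv (by simp; try ring)

lemma gint : Integrable (fun u : ℝ => Real.exp (-u ^ 2 / 2)) := by
  have := integrable_exp_neg_mul_sq (b := 1/2) (by norm_num)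
  refine this.congr (Filter.Eventually.of_forall fun x => ?_)
  simp only []
  congr 1; ring

lemma gtot : ∫ u : ℝ, Real.exp (-u ^ 2 / 2) = Real.sqrt (2 * Real.pi) := by
  have := integral_gaussian (1/2)
  rw [show Real.pi / (1/2) = 2 * Real.pi by ring] at this
  rw [← this]
  congr 1; ext x; congr 1; ring

lemma c_pos : 0 < Real.sqrt (2 * Real.pi) := Real.sqrt_pos.2 (by positivity)

lemma one_sub_Phi (z : ℝ) :
    1 - Phi z = (Real.sqrt (2 * Real.pi))⁻¹ * ∫ u in Set.Ioi z, Real.exp (-u ^ 2 / 2) := by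
  have h := intervalIntegral.integral_Iic_add_Ioi (b := z) (gint.integrableOn) (gint.integrableOn)
  rw [gtot] at h
  have hc := c_pos
  unfold Phi
  rw [← h]
  rw [← h] at hc
  generalize (∫ u in Set.Iic z, Real.exp (-u ^ 2 / 2)) = p at *
  generalize (∫ u in Set.Ioi z, Real.exp (-u ^ 2 / 2)) = q at *
  field_simp
  ring

lemma Phi_nonneg (z : ℝ) : 0 ≤ Phi z := by
  unfold Phi
  have : 0 ≤ ∫ u in Set.Iic z, Real.exp (-u ^ 2 / 2) := integral_nonneg fun _ => (Real.exp_pos _).le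
  positivity

lemma one_sub_Phi_nonneg (z : ℝ) : 0 ≤ 1 - Phi z := by
  rw [one_sub_Phi]
  have : 0 ≤ ∫ u in Set.Ioi z, Real.exp (-u ^ 2 / 2) := integral_nonneg fun _ => (Real.exp_pos _).le
  positivity

lemma Phi_neg (x : ℝ) : Phi (-x) = 1 - Phi x := by
  rw [one_sub_Phi]
  unfold Phi
  congr 1
  have := integral_comp_neg_Ioi x (fun u : ℝ => Real.exp (-u ^ 2 / 2))
  simpa using this.symm

lemma Phi_hasDerivAt (w : ℝ) :
    HasDerivAt Phi ((Real.sqrt (2 * Real.pi))⁻¹ * Real.exp (-w ^ 2 / 2)) w := by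
  have h1 : HasDerivAt (fun w => ∫ u in (0:ℝ)..w, Real.exp (-u ^ 2 / 2)) (Real.exp (-w ^ 2 / 2)) w := by
    have hcont : Continuous (fun u : ℝ => Real.exp (-u ^ 2 / 2)) := by fun_prop
    exact intervalIntegral.integral_hasDerivAt_right (hcont.intervalIntegrable _ _)
      hcont.aestronglyMeasurable.stronglyMeasurableAtFilter hcont.continuousAt
  have h2 : (fun w => ∫ u in Set.Iic w, Real.exp (-u ^ 2 / 2))
      = fun w => (∫ u in Set.Iic (0:ℝ), Real.exp (-u ^ 2 / 2)) + ∫ u in (0:ℝ)..w, Real.exp (-u ^ 2 / 2) := by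
    ext w
    have := intervalIntegral.integral_Iic_sub_Iic (a := 0) (b := w) (μ := volume) gint.integrableOn gint.integrableOn
    linarith
  unfold Phi
  have h3 := h1.const_add (∫ u in Set.Iic (0:ℝ), Real.exp (-u ^ 2 / 2))
  rw [← h2] at h3
  exact h3.const_mul _

/-- Mills ratio. -/
noncomputable def mil (x : ℝ) : ℝ := Real.sqrt (2 * Real.pi) * Real.exp (x ^ 2 / 2) * (1 - Phi x)

lemma mil_nonneg (x : ℝ) : 0 ≤ mil x := by
  unfold mil
  have := one_sub_Phi_nonneg x
  positivity

lemma mills_upper0 (x : ℝ) (hx : 0 < x) :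
    x * ∫ u in Set.Ioi x, Real.exp (-u ^ 2 / 2) ≤ Real.exp (-x ^ 2 / 2) := by
  have hd : ∀ u : ℝ, HasDerivAt (fun u : ℝ => - Real.exp (-u ^ 2 / 2)) (u * Real.exp (-u ^ 2 / 2)) u := by
    intro u
    have : HasDerivAt (fun u : ℝ => -u ^ 2 / 2) (-u) u := by
      exact sqh_deriv u
    exact (this.exp).neg.congr_deriv (by ring)
  have ht : Filter.Tendsto (fun u : ℝ => - Real.exp (-u ^ 2 / 2)) Filter.atTop (nhds (-0)) := by
    refine Filter.Tendsto.neg ?_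
    refine Real.tendsto_exp_atBot.comp ?_
    have : Filter.Tendsto (fun u : ℝ => u ^ 2 / 2) Filter.atTop Filter.atTop :=
      (Filter.tendsto_pow_atTop (by norm_num)).atTop_div_const (by norm_num)
    refine (Filter.tendsto_neg_atTop_atBot.comp this).congr fun u => ?_
    simp; ring
  have hpos : ∀ u ∈ Set.Ioi x, 0 ≤ u * Real.exp (-u ^ 2 / 2) := fun u hu =>
    mul_nonneg (le_of_lt (lt_trans hx hu)) (Real.exp_pos _).le
  have h1 := integral_Ioi_of_hasDerivAt_of_nonneg' (a := x) (fun u _ => hd u) hpos ht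
  have h2 := integrableOn_Ioi_deriv_of_nonneg' (a := x) (fun u _ => hd u) hpos ht
  have h3 : x * ∫ u in Set.Ioi x, Real.exp (-u ^ 2 / 2) ≤ ∫ u in Set.Ioi x, u * Real.exp (-u ^ 2 / 2) := by
    rw [← integral_const_mul]
    refine setIntegral_mono_on (gint.integrableOn.const_mul x) h2 measurableSet_Ioi ?_
    intro u hu
    exact mul_le_mul_of_nonneg_right (le_of_lt hu) (Real.exp_pos _).le
  rw [h1] at h3
  linarith

lemma exp_sq_mul (x : ℝ) : Real.exp (x ^ 2 / 2) * Real.exp (-x ^ 2 / 2) = 1 := by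
  rw [← Real.exp_add, show x ^ 2 / 2 + -x ^ 2 / 2 = 0 by ring, Real.exp_zero]

lemma mil_eq (x : ℝ) : mil x = Real.exp (x ^ 2 / 2) * ∫ u in Set.Ioi x, Real.exp (-u ^ 2 / 2) := by
  unfold mil
  rw [one_sub_Phi]
  have := c_pos
  field_simp

lemma mil_upper (x : ℝ) (hx : 0 < x) : x * mil x ≤ 1 := by
  rw [mil_eq]
  have := mul_le_mul_of_nonneg_left (mills_upper0 x hx) (Real.exp_pos (x ^ 2 / 2)).le
  rw [exp_sq_mul] at this
  linarith

lemma one_sub_Phi_le (z : ℝ) (hz : 0 < z) :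
    Real.sqrt (2 * Real.pi) * (1 - Phi z) * z ≤ Real.exp (-z ^ 2 / 2) := by
  rw [one_sub_Phi]
  have := c_pos
  have := mills_upper0 z hz
  field_simp
  field_simp at this
  linarith

lemma tail_tendsto : Filter.Tendsto (fun x => 1 - Phi x) Filter.atTop (nhds 0) := by
  have hc := c_pos
  refine tendsto_of_tendsto_of_tendsto_of_le_of_le' tendsto_const_nhds
    (h := fun x : ℝ => (Real.sqrt (2 * Real.pi))⁻¹ * x⁻¹) ?_ (Filter.Eventually.of_forall one_sub_Phi_nonneg) ?_
  · have := (tendsto_inv_atTop_zero (𝕜 := ℝ)).const_mul (Real.sqrt (2 * Real.pi))⁻¹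
    simpa using this
  · filter_upwards [Filter.eventually_gt_atTop 0] with x hx
    have h := one_sub_Phi_le x hx
    have h2 : Real.exp (-x ^ 2 / 2) ≤ 1 := Real.exp_le_one_iff.2 (by nlinarith [sq_nonneg x])
    have h3 : Real.sqrt (2 * Real.pi) * (1 - Phi x) * x ≤ 1 := h.trans h2
    rw [← mul_inv, ← one_div, le_div_iff₀ (by positivity)]
    linarith

lemma mil_lower (x : ℝ) : x ≤ (1 + x ^ 2) * mil x := by
  set h : ℝ → ℝ := fun x => Real.sqrt (2 * Real.pi) * (1 - Phi x) - x / (1 + x ^ 2) * Real.exp (-x ^ 2 / 2) with hh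
  have hc := c_pos
  have hd : ∀ x, HasDerivAt h (-2 / (1 + x ^ 2) ^ 2 * Real.exp (-x ^ 2 / 2)) x := by
    intro u
    have h1 : HasDerivAt (fun u : ℝ => -u ^ 2 / 2) (-u) u := by
      exact sqh_deriv u
    have hp : (1 + u ^ 2) ≠ 0 := by positivity
    have h2 : HasDerivAt (fun u : ℝ => u / (1 + u ^ 2)) ((1 * (1 + u ^ 2) - u * (2 * u)) / (1 + u ^ 2) ^ 2) u := by
      have h3 : HasDerivAt (fun u : ℝ => 1 + u ^ 2) (2 * u) u := by
        exact ((hasDerivAt_pow 2 u).const_add 1).congr_deriv (by simp; try ring)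
      exact (hasDerivAt_id u).div h3 hp
    have h4 := (((Phi_hasDerivAt u).const_sub 1).const_mul (Real.sqrt (2 * Real.pi))).sub (h2.mul h1.exp)
    refine h4.congr_deriv ?_
    field_simp
    ring
  have hanti : Antitone h := antitone_of_hasDerivAt_nonpos (f' := fun x => -2 / (1 + x ^ 2) ^ 2 * Real.exp (-x ^ 2 / 2)) hd (by
    intro x
    have : 0 < (1 + x ^ 2) ^ 2 := by positivity
    have h2 := Real.exp_pos (-x ^ 2 / 2)
    change -2 / (1 + x ^ 2) ^ 2 * Real.exp (-x ^ 2 / 2) ≤ 0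
    rw [neg_div, neg_mul]
    have : 0 ≤ 2 / (1 + x ^ 2) ^ 2 * Real.exp (-x ^ 2 / 2) := by positivity
    simpa using this)
  have ht : Filter.Tendsto h Filter.atTop (nhds 0) := by
    have h1 := tail_tendsto.const_mul (Real.sqrt (2 * Real.pi))
    have h2 : Filter.Tendsto (fun x : ℝ => x / (1 + x ^ 2) * Real.exp (-x ^ 2 / 2)) Filter.atTop (nhds 0) := by
      refine tendsto_of_tendsto_of_tendsto_of_le_of_le' tendsto_const_nhds
        (h := fun x : ℝ => x⁻¹) tendsto_inv_atTop_zero ?_ ?_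
      · filter_upwards [Filter.eventually_gt_atTop 0] with x hx
        positivity
      · filter_upwards [Filter.eventually_gt_atTop 0] with x hx
        have h2 : Real.exp (-x ^ 2 / 2) ≤ 1 := Real.exp_le_one_iff.2 (by nlinarith [sq_nonneg x])
        have h3 : x / (1 + x ^ 2) ≤ x⁻¹ := by
          rw [div_le_iff₀ (by positivity), mul_add, mul_one]
          have : x⁻¹ * x ^ 2 = x := by field_simp
          rw [this]
          have : 0 < x⁻¹ := by positivity
          linarith
        calc _ ≤ x / (1 + x ^ 2) * 1 := mul_le_mul_of_nonneg_left h2 (by positivity)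
          _ ≤ _ := by linarith
    have := h1.sub h2
    rw [mul_zero, sub_zero] at this
    exact this
  have h0 : 0 ≤ h x := hanti.le_of_tendsto ht x
  simp only [hh] at h0
  have h1 : x / (1 + x ^ 2) * Real.exp (-x ^ 2 / 2) ≤ Real.sqrt (2 * Real.pi) * (1 - Phi x) := by linarith
  have h2 := mul_le_mul_of_nonneg_left h1 (show 0 ≤ (1 + x ^ 2) * Real.exp (x ^ 2 / 2) by positivity)
  have h3 : (1 + x ^ 2) * Real.exp (x ^ 2 / 2) * (x / (1 + x ^ 2) * Real.exp (-x ^ 2 / 2)) = x := by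
    have := exp_sq_mul x
    have hp : (1 + x ^ 2) ≠ 0 := by positivity
    calc _ = ((1 + x ^ 2) * (x / (1 + x ^ 2))) * (Real.exp (x ^ 2 / 2) * Real.exp (-x ^ 2 / 2)) := by ring
      _ = x := by rw [this]; field_simp
  rw [h3] at h2
  unfold mil
  linarith

/-! ## The Stein solution -/

/-- Right derivative of `fz`. -/
noncomputable def fzr (z w : ℝ) : ℝ :=
  w * fz z w + (if w < z then 1 else 0) - Phi z

/-- The dominating function. -/
noncomputable def BB (z w : ℝ) : ℝ := 4 * Real.exp (-z / 2) * (1 + Real.exp w)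

lemma BB_mono (z : ℝ) : Monotone (BB z) := by
  intro a b h
  unfold BB
  have := Real.exp_le_exp.2 h
  have := Real.exp_pos (-z / 2)
  gcongr

lemma BB_nonneg (z w : ℝ) : 0 ≤ BB z w := by
  unfold BB; positivity

lemma fz_left {z w : ℝ} (h : w ≤ z) : fz z w = (1 - Phi z) * mil (-w) := by
  unfold fz mil
  rw [if_pos h, Phi_neg, neg_sq]
  ring

lemma fz_right {z w : ℝ} (h : z ≤ w) : fz z w = Phi z * mil w := by
  rcases h.eq_or_lt with h | h
  · subst h
    unfold fz mil
    rw [if_pos le_rfl]; ring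
  · unfold fz mil
    rw [if_neg (not_le.2 h)]; ring

lemma id_le_exp_half (x : ℝ) : x ≤ Real.exp (x / 2) := by
  by_cases hx : 0 ≤ x
  · have h := Real.add_one_le_exp (x / 4)
    have h2 : Real.exp (x / 2) = Real.exp (x / 4) ^ 2 := by
      rw [← Real.exp_nat_mul]; congr 1; push_cast; ring
    rw [h2]
    nlinarith [sq_nonneg (x / 4 - 1)]
  · have := Real.exp_pos (x / 2)
    linarith

lemma Phi_le_one (z : ℝ) : Phi z ≤ 1 := by linarith [one_sub_Phi_nonneg z]

lemma c_ge_one : 1 ≤ Real.sqrt (2 * Real.pi) := by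
  rw [Real.one_le_sqrt]; linarith [Real.pi_gt_three]

lemma tail_c {z : ℝ} (hz : 2 < z) :
    Real.sqrt (2 * Real.pi) * (1 - Phi z) ≤ Real.exp (-z ^ 2 / 2) / z := by
  rw [le_div_iff₀ (by linarith)]
  exact one_sub_Phi_le z (by linarith)

lemma tail_le {z : ℝ} (hz : 2 < z) :
    Real.sqrt (2 * Real.pi) * (1 - Phi z) ≤ Real.exp (-z) / 2 := by
  have h1 := one_sub_Phi_le z (by linarith)
  have h2 : Real.exp (-z ^ 2 / 2) ≤ Real.exp (-z) := Real.exp_le_exp.2 (by nlinarith)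
  have h3 : 0 ≤ Real.sqrt (2 * Real.pi) * (1 - Phi z) := mul_nonneg c_pos.le (one_sub_Phi_nonneg z)
  nlinarith

lemma tail_le' {z : ℝ} (hz : 2 < z) : 1 - Phi z ≤ Real.exp (-z) / 2 := by
  have h1 := tail_le hz
  have h2 := c_ge_one
  have h3 := one_sub_Phi_nonneg z
  nlinarith

lemma exp_split (z : ℝ) : Real.exp (-z) = Real.exp (-z / 2) * Real.exp (-z / 2) := by
  rw [← Real.exp_add]; congr 1; ring

lemma exp_neg_le {z : ℝ} (hz : 2 < z) : Real.exp (-z) ≤ Real.exp (-z / 2) :=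
  Real.exp_le_exp.2 (by linarith)

/-- bounds in the right region -/
lemma right_bounds {z w : ℝ} (hz : 2 < z) (hw : z ≤ w) :
    0 ≤ Phi z * mil w ∧ Phi z * mil w ≤ BB z w ∧ |w * (Phi z * mil w) - Phi z| ≤ BB z w ∧
    |Phi z * mil w + w * (w * (Phi z * mil w) - Phi z)| ≤ BB z w := by
  have hm := mil_nonneg w
  have hm1 := mil_upper w (by linarith)
  have hP := Phi_nonneg z
  have hP1 := Phi_le_one z
  have hB : w + 1 ≤ BB z w := by
    have h1 := id_le_exp_half w
    have h2 : Real.exp (w / 2) ≤ Real.exp (-z / 2) * Real.exp w := by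
      rw [← Real.exp_add]; exact Real.exp_le_exp.2 (by linarith)
    have := Real.exp_pos (-z / 2)
    unfold BB
    nlinarith
  have hm2 : mil w ≤ 1 := by nlinarith
  have h0 : 0 ≤ Phi z * mil w := mul_nonneg hP hm
  have h1 : Phi z * mil w ≤ 1 := by nlinarith
  have h2 : 0 ≤ w * (Phi z * mil w) := mul_nonneg (by linarith) h0
  have h3 : w * (Phi z * mil w) ≤ Phi z := by
    have := mul_le_mul_of_nonneg_left hm1 hP
    linarith
  refine ⟨h0, by linarith, ?_, ?_⟩
  · rw [abs_le]; constructor <;> linarith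
  · have h4 : w * (w * (Phi z * mil w) - Phi z) ≤ 0 := mul_nonpos_of_nonneg_of_nonpos (by linarith) (by linarith)
    have h5 : -w ≤ w * (w * (Phi z * mil w) - Phi z) := by nlinarith
    rw [abs_le]; constructor <;> linarith

set_option maxHeartbeats 2000000 in
/-- bounds in the left region -/
lemma left_bounds {z w : ℝ} (hz : 2 < z) (hw : w ≤ z) :
    0 ≤ (1 - Phi z) * mil (-w) ∧ (1 - Phi z) * mil (-w) ≤ BB z w ∧
    |w * ((1 - Phi z) * mil (-w)) + (1 - Phi z)| ≤ BB z w ∧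
    |(1 - Phi z) * mil (-w) + w * (w * ((1 - Phi z) * mil (-w)) + (1 - Phi z))| ≤ BB z w := by
  have hm := mil_nonneg (-w)
  have hq := one_sub_Phi_nonneg z
  have hq1 := tail_le' hz
  have hqc := tail_le hz
  have he := exp_neg_le hz
  have hep := Real.exp_pos (-z)
  have h0 : 0 ≤ (1 - Phi z) * mil (-w) := mul_nonneg hq hm
  have hmle : mil (-w) ≤ Real.sqrt (2 * Real.pi) * Real.exp (w ^ 2 / 2) := by
    unfold mil
    rw [neg_sq]
    have := Phi_nonneg (-w)
    have h2 : 0 ≤ Real.sqrt (2 * Real.pi) * Real.exp (w ^ 2 / 2) := by positivity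
    nlinarith
  by_cases hw0 : 0 ≤ w
  · -- 0 ≤ w ≤ z
    have hf : (1 - Phi z) * mil (-w) ≤ Real.exp (w - z) / z := by
      have h1 := mul_le_mul_of_nonneg_left hmle hq
      have h2 := mul_le_mul_of_nonneg_right (tail_c hz) (Real.exp_pos (w ^ 2 / 2)).le
      have h3 : Real.exp (-z ^ 2 / 2) * Real.exp (w ^ 2 / 2) ≤ Real.exp (w - z) := by
        rw [← Real.exp_add]
        refine Real.exp_le_exp.2 ?_
        nlinarith
      have h4 : Real.exp (-z ^ 2 / 2) / z * Real.exp (w ^ 2 / 2) ≤ Real.exp (w - z) / z := by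
        rw [div_mul_eq_mul_div]
        gcongr
      linarith
    rw [le_div_iff₀ (by linarith)] at hf
    have hez : Real.exp (w - z) = Real.exp (-z / 2) * (Real.exp (-z / 2) * Real.exp w) := by
      rw [← Real.exp_add, ← Real.exp_add]; congr 1; ring
    have hzz : z * Real.exp (-z / 2) ≤ 1 := by
      have h1 := id_le_exp_half z
      have h2 : Real.exp (z / 2) * Real.exp (-z / 2) = 1 := by
        rw [← Real.exp_add, show z / 2 + -z / 2 = 0 by ring, Real.exp_zero]
      have := Real.exp_pos (-z / 2)
      nlinarith
    have hz1 : z * Real.exp (w - z) ≤ Real.exp (-z / 2) * Real.exp w := by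
      rw [hez]
      have : 0 < Real.exp (-z / 2) * Real.exp w := by positivity
      nlinarith
    have hz2 : z * Real.exp (-z) ≤ Real.exp (-z / 2) := by
      rw [exp_split]
      have := Real.exp_pos (-z / 2)
      nlinarith
    have hB : BB z w = 4 * Real.exp (-z / 2) + 4 * (Real.exp (-z / 2) * Real.exp w) := by
      unfold BB; ring
    have hp1 := Real.exp_pos (w - z)
    set F := (1 - Phi z) * mil (-w) with hF
    have hF1 : F ≤ Real.exp (w - z) := by nlinarith
    have hwF : w * F ≤ Real.exp (w - z) := by nlinarith
    have hwF0 : 0 ≤ w * F := mul_nonneg hw0 h0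
    have hwwF : w * (w * F) ≤ z * Real.exp (w - z) := by
      have : w * (w * F) ≤ z * (w * F) := mul_le_mul_of_nonneg_right hw hwF0
      nlinarith
    have hwq : w * (1 - Phi z) ≤ z * Real.exp (-z) := by nlinarith
    have hwq0 : 0 ≤ w * (1 - Phi z) := mul_nonneg hw0 hq
    have hwwF0 : 0 ≤ w * (w * F) := mul_nonneg hw0 hwF0
    have h5 : Real.exp (w - z) ≤ z * Real.exp (w - z) := by nlinarith
    have hep2 := Real.exp_pos (-z / 2)
    refine ⟨h0, ?_, ?_, ?_⟩
    · rw [hB]; nlinarith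
    · rw [abs_of_nonneg (by linarith), hB]; nlinarith
    · have : F + w * (w * F + (1 - Phi z)) = F + w * (w * F) + w * (1 - Phi z) := by ring
      rw [this, abs_of_nonneg (by linarith), hB]
      linarith
  · -- w < 0
    push Not at hw0
    obtain ⟨x, rfl⟩ : ∃ x, w = -x := ⟨-w, by ring⟩
    have hx : 0 < x := by linarith
    rw [neg_neg] at *
    have hu := mil_upper x hx
    have hl := mil_lower x
    have hB : 4 * Real.exp (-z) ≤ BB z (-x) := by
      unfold BB
      have := Real.exp_pos (-x)
      have := Real.exp_pos (-z / 2)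
      nlinarith
    -- bound for q * mil
    have hqm : (1 - Phi z) * mil x ≤ Real.exp (-z) ∧ (1 - Phi z) * ((1 + x ^ 2) * mil x - x) ≤ 2 * Real.exp (-z) := by
      rcases le_total x 1 with h1 | h1
      · have h2 : Real.exp ((-x) ^ 2 / 2) ≤ 2 := by
          have : Real.exp ((-x) ^ 2 / 2) ≤ Real.exp (1 / 2) := Real.exp_le_exp.2 (by nlinarith)
          have h3 : Real.exp (1 / 2) * Real.exp (1 / 2) = Real.exp 1 := by rw [← Real.exp_add]; norm_num
          have h4 := Real.exp_one_lt_d9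
          have h5 := Real.exp_pos (1 / 2)
          nlinarith
        have h3 : (1 - Phi z) * mil x ≤ Real.exp (-z) := by
          have h4 := mul_le_mul_of_nonneg_left hmle hq
          have h5 : (1 - Phi z) * (Real.sqrt (2 * Real.pi) * Real.exp ((-x) ^ 2 / 2)) =
            (Real.sqrt (2 * Real.pi) * (1 - Phi z)) * Real.exp ((-x) ^ 2 / 2) := by ring
          rw [h5] at h4
          have h6 : 0 ≤ Real.sqrt (2 * Real.pi) * (1 - Phi z) := mul_nonneg c_pos.le hq
          nlinarith
        refine ⟨h3, ?_⟩
        have h7 : (1 + x ^ 2) * ((1 - Phi z) * mil x) ≤ 2 * Real.exp (-z) := by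
          have : (1 + x ^ 2) ≤ 2 := by nlinarith
          nlinarith
        have : 0 ≤ (1 - Phi z) * x := mul_nonneg hq hx.le
        nlinarith
      · have h2 : mil x ≤ 1 := by nlinarith
        refine ⟨by nlinarith, ?_⟩
        have h3 : (1 + x ^ 2) * mil x - x ≤ 1 := by nlinarith
        nlinarith
    refine ⟨h0, by linarith, ?_, ?_⟩
    · have h1 : -x * ((1 - Phi z) * mil x) + (1 - Phi z) = (1 - Phi z) * (1 - x * mil x) := by ring
      have h2 : 0 ≤ x * mil x := mul_nonneg hx.le hm
      rw [h1, abs_of_nonneg (mul_nonneg hq (by linarith))]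
      nlinarith
    · have h1 : (1 - Phi z) * mil x + -x * (-x * ((1 - Phi z) * mil x) + (1 - Phi z))
        = (1 - Phi z) * ((1 + x ^ 2) * mil x - x) := by ring
      rw [h1, abs_of_nonneg (mul_nonneg hq (by linarith))]
      linarith

lemma fz_nonneg {z : ℝ} (hz : 2 < z) (w : ℝ) : 0 ≤ fz z w := by
  rcases le_total w z with h | h
  · rw [fz_left h]; exact (left_bounds hz h).1
  · rw [fz_right h]; exact (right_bounds hz h).1

lemma fz_le {z : ℝ} (hz : 2 < z) (w : ℝ) : fz z w ≤ BB z w := by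
  rcases le_total w z with h | h
  · rw [fz_left h]; exact (left_bounds hz h).2.1
  · rw [fz_right h]; exact (right_bounds hz h).2.1

lemma fz'_le {z : ℝ} (hz : 2 < z) (w : ℝ) : |fz' z w| ≤ BB z w := by
  unfold fz'
  rcases le_or_gt w z with h | h
  · rw [fz_left h, if_pos h, add_sub_assoc]; exact (left_bounds hz h).2.2.1
  · rw [fz_right h.le, if_neg (not_le.2 h), add_zero]; exact (right_bounds hz h.le).2.2.1

lemma fzr_le {z : ℝ} (hz : 2 < z) (w : ℝ) : |fzr z w| ≤ BB z w := by
  unfold fzr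
  rcases lt_or_ge w z with h | h
  · rw [fz_left h.le, if_pos h, add_sub_assoc]; exact (left_bounds hz h.le).2.2.1
  · rw [fz_right h, if_neg (not_lt.2 h), add_zero]; exact (right_bounds hz h).2.2.1

lemma gzr_le {z : ℝ} (hz : 2 < z) (w : ℝ) : |fz z w + w * fzr z w| ≤ BB z w := by
  unfold fzr
  rcases lt_or_ge w z with h | h
  · rw [fz_left h.le, if_pos h, add_sub_assoc]; exact (left_bounds hz h.le).2.2.2
  · rw [fz_right h, if_neg (not_lt.2 h), add_zero]; exact (right_bounds hz h).2.2.2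

lemma mil_hasDerivAt (w : ℝ) : HasDerivAt mil (w * mil w - 1) w := by
  have h1 : HasDerivAt (fun u : ℝ => u ^ 2 / 2) w w :=
    ((hasDerivAt_pow 2 w).div_const 2).congr_deriv (by simp)
  have h2 := (h1.exp.const_mul (Real.sqrt (2 * Real.pi))).mul ((Phi_hasDerivAt w).const_sub 1)
  refine h2.congr_deriv ?_
  have h3 := exp_sq_mul w
  have hc := c_pos
  unfold mil
  have : √(2 * π) * rexp (w ^ 2 / 2) * -((√(2 * π))⁻¹ * rexp (-w ^ 2 / 2)) = -1 := by
    calc _ = -((√(2 * π) * (√(2 * π))⁻¹) * (rexp (w ^ 2 / 2) * rexp (-w ^ 2 / 2))) := by ring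
      _ = -1 := by rw [h3, mul_inv_cancel₀ hc.ne']; ring
  rw [this]; ring

lemma fz_continuous (z : ℝ) : Continuous (fz z) := by
  have hm : Continuous mil := continuous_iff_continuousAt.2 fun w => (mil_hasDerivAt w).continuousAt
  have : fz z = fun w => if w ≤ z then (1 - Phi z) * mil (-w) else Phi z * mil w := by
    ext w
    split_ifs with h
    · exact fz_left h
    · exact fz_right (not_le.1 h).le
  rw [this]
  refine Continuous.if_le (by fun_prop) (by fun_prop) continuous_id continuous_const ?_
  intro w hw
  subst hw
  rw [← fz_left le_rfl, ← fz_right le_rfl]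

lemma fz_hasDeriv (z w : ℝ) : HasDerivWithinAt (fz z) (fzr z w) (Set.Ici w) w := by
  rcases lt_or_ge w z with h | h
  · refine HasDerivAt.hasDerivWithinAt ?_
    have h1 : HasDerivAt (fun w => (1 - Phi z) * mil (-w)) (fzr z w) w := by
      have := ((mil_hasDerivAt (-w)).comp w (hasDerivAt_neg w)).const_mul (1 - Phi z)
      refine this.congr_deriv ?_
      unfold fzr
      rw [if_pos h, fz_left h.le]; ring
    refine h1.congr_of_eventuallyEq ?_
    filter_upwards [Iio_mem_nhds h] with u hu
    exact fz_left (le_of_lt hu)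
  · have h1 : HasDerivAt (fun w => Phi z * mil w) (fzr z w) w := by
      refine ((mil_hasDerivAt w).const_mul (Phi z)).congr_deriv ?_
      unfold fzr
      rw [if_neg (not_lt.2 h), fz_right h]; ring
    refine h1.hasDerivWithinAt.congr ?_ (fz_right h)
    intro u hu
    exact fz_right (h.trans hu)

lemma gz_hasDeriv (z w : ℝ) :
    HasDerivWithinAt (fun u => u * fz z u) (fz z w + w * fzr z w) (Set.Ici w) w := by
  have := (hasDerivWithinAt_id w (Set.Ici w)).mul (fz_hasDeriv z w)
  exact this.congr_deriv (by simp)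

lemma gz_lip {z : ℝ} (hz : 2 < z) {a b : ℝ} (hab : a ≤ b) :
    |b * fz z b - a * fz z a| ≤ BB z b * (b - a) := by
  have := norm_image_sub_le_of_norm_deriv_right_le_segment (a := a) (b := b)
    (f := fun u => u * fz z u) (f' := fun w => fz z w + w * fzr z w) (C := BB z b)
    ((continuous_id.mul (fz_continuous z)).continuousOn) (fun x _ => gz_hasDeriv z x)
    (fun x hx => (gzr_le hz x).trans (BB_mono z hx.2.le)) b ⟨hab, le_rfl⟩
  simpa using this

lemma fz_lip {z : ℝ} {a b c C : ℝ} (hab : a ≤ b)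
    (hb : ∀ u, a ≤ u → u < b → |fzr z u - c| ≤ C) :
    |fz z b - fz z a - (b - a) * c| ≤ C * (b - a) := by
  have := norm_image_sub_le_of_norm_deriv_right_le_segment (a := a) (b := b)
    (f := fun u => fz z u - u * c) (f' := fun w => fzr z w - c) (C := C)
    (((fz_continuous z).sub (continuous_id.mul continuous_const)).continuousOn) (fun x _ => ?_)
    (fun x hx => hb x hx.1 hx.2) b ⟨hab, le_rfl⟩
  · rw [Real.norm_eq_abs] at this
    convert this using 2; ring
  · have := (fz_hasDeriv z x).sub ((hasDerivWithinAt_id x (Set.Ici x)).mul_const c)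
    exact this.congr_deriv (by simp)

/-- The combined increment bound. -/
noncomputable def HH (z x w : ℝ) : ℝ :=
  2 * min |x| 1 * BB z (w + 1) + (if |w - z| ≤ min |x| 1 then 1 else 0)

lemma HH_gen {z : ℝ} (hz : 2 < z) {x w : ℝ} (hx1 : |x| ≤ 1) {u : ℝ} (hu : |u - w| ≤ |x|) (i j : ℝ)
    (hij : i - j = 0 ∨ (|i - j| ≤ 1 ∧ |w - z| ≤ |x|)) :
    |(u * fz z u + i - Phi z) - (w * fz z w + j - Phi z)| ≤ HH z x w := by
  have hg : |u * fz z u - w * fz z w| ≤ |x| * BB z (w + 1) := by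
    have hB := BB_nonneg z (w + 1)
    rcases le_total w u with h | h
    · have h1 := gz_lip hz h
      rw [abs_of_nonneg (by linarith)] at hu
      have h2 : BB z u ≤ BB z (w + 1) := BB_mono z (by linarith)
      have h3 := BB_nonneg z u
      nlinarith
    · have h1 := gz_lip hz h
      rw [abs_sub_comm] at h1
      rw [abs_of_nonpos (by linarith)] at hu
      have h2 : BB z w ≤ BB z (w + 1) := BB_mono z (by linarith)
      have h3 := BB_nonneg z w
      nlinarith
  have hB := mul_nonneg (abs_nonneg x) (BB_nonneg z (w + 1))
  unfold HH
  rw [min_eq_left hx1]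
  have e : (u * fz z u + i - Phi z) - (w * fz z w + j - Phi z) = (u * fz z u - w * fz z w) + (i - j) := by ring
  rw [e]
  rcases hij with h | ⟨h, h'⟩
  · rw [h, add_zero]
    split_ifs <;> linarith
  · rw [if_pos h']
    have := abs_add_le (u * fz z u - w * fz z w) (i - j)
    linarith

lemma HH_fz' {z : ℝ} (hz : 2 < z) {x w : ℝ} (hx : x ≤ 1) :
    |fz' z (w + x) - fz' z w| ≤ HH z x w := by
  by_cases hx1 : |x| ≤ 1
  · unfold fz'
    refine HH_gen hz hx1 (by simp) _ _ ?_
    split_ifs with h1 h2 h2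
    · simp
    · right
      refine ⟨by norm_num, ?_⟩
      rw [abs_of_pos (by linarith)]
      linarith [neg_abs_le x]
    · right
      refine ⟨by norm_num, ?_⟩
      rw [abs_of_nonpos (by linarith)]
      linarith [le_abs_self x]
    · simp
  · have hx2 : x < -1 := by
      by_contra h
      exact hx1 (abs_le.2 ⟨by linarith, hx⟩)
    have h1 := (fz'_le hz (w + x)).trans (BB_mono z (show w + x ≤ w + 1 by linarith))
    have h2 := (fz'_le hz w).trans (BB_mono z (show w ≤ w + 1 by linarith))
    have h3 := abs_sub (fz' z (w + x)) (fz' z w)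
    unfold HH
    rw [min_eq_right (by linarith)]
    split_ifs <;> linarith

lemma HH_R {z : ℝ} (hz : 2 < z) {x w : ℝ} (hx : x ≤ 1) :
    |fz z (w + x) - fz z w - x * fz' z w| ≤ |x| * HH z x w := by
  have key : ∀ u, min w (w + x) ≤ u → u < max w (w + x) → |fzr z u - fz' z w| ≤ HH z x w := by
    intro u hu1 hu2
    by_cases hx1 : |x| ≤ 1
    · unfold fz' fzr
      have hux : |u - w| ≤ |x| := by
        rcases le_total 0 x with h | h
        · rw [min_eq_left (by linarith)] at hu1
          rw [max_eq_right (by linarith)] at hu2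
          rw [abs_of_nonneg h, abs_of_nonneg (by linarith)]; linarith
        · rw [min_eq_right (by linarith)] at hu1
          rw [max_eq_left (by linarith)] at hu2
          rw [abs_of_nonpos h, abs_of_nonpos (by linarith)]; linarith
      refine HH_gen hz hx1 hux _ _ ?_
      rw [abs_le] at hux
      split_ifs with h1 h2 h2
      · simp
      · right
        refine ⟨by norm_num, ?_⟩
        rw [abs_of_pos (by linarith)]
        linarith
      · right
        refine ⟨by norm_num, ?_⟩
        rw [abs_of_nonpos (by linarith)]
        linarith
      · simp
    · have hx2 : x < -1 := by
        by_contra h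
        exact hx1 (abs_le.2 ⟨by linarith, hx⟩)
      rw [max_eq_left (by linarith)] at hu2
      have h1 := (fzr_le hz u).trans (BB_mono z (show u ≤ w + 1 by linarith))
      have h2 := (fz'_le hz w).trans (BB_mono z (show w ≤ w + 1 by linarith))
      have h3 := abs_sub (fzr z u) (fz' z w)
      unfold HH
      rw [min_eq_right (by linarith)]
      split_ifs <;> linarith
  rcases le_total 0 x with h | h
  · rw [min_eq_left (by linarith), max_eq_right (by linarith)] at key
    have := fz_lip (z := z) (show w ≤ w + x by linarith) key
    rw [abs_of_nonneg h]
    convert this using 1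
    · congr 1; ring
    · ring
  · rw [min_eq_right (by linarith), max_eq_left (by linarith)] at key
    have := fz_lip (z := z) (show w + x ≤ w by linarith) key
    rw [abs_of_nonpos h, ← abs_neg]
    convert this using 1
    · congr 1; ring
    · ring

/-! ## Independent summands bounded above by one -/

/-- Standing assumptions on the truncated summands. -/
structure Good {Ω : Type*} [MeasurableSpace Ω] (μ : Measure Ω) {n : ℕ} (X : Fin n → Ω → ℝ) : Prop where
  meas : ∀ i, Measurable (X i)
  indep : iIndepFun X μ
  le_one : ∀ i ω, X i ω ≤ 1
  l2 : ∀ i, MemLp (X i) 2 μ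
  mean : ∀ i, ∫ ω, X i ω ∂μ ≤ 0
  var : ∑ i, ∫ ω, X i ω ^ 2 ∂μ ≤ 1

/-- Partial sums. -/
def SS {Ω : Type*} {n : ℕ} (X : Fin n → Ω → ℝ) (s : Finset (Fin n)) (ω : Ω) : ℝ := ∑ j ∈ s, X j ω

lemma exp_le_quad {x : ℝ} (hx : x ≤ 1) : Real.exp x ≤ 1 + x + x ^ 2 := by
  by_cases h : -1 ≤ x
  · have := Real.abs_exp_sub_one_sub_id_le (abs_le.2 ⟨h, hx⟩)
    linarith [(abs_le.1 this).2]
  · have h1 : Real.exp x ≤ 1 := Real.exp_le_one_iff.2 (by linarith)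
    nlinarith

section prob

variable {Ω : Type*} [MeasurableSpace Ω] {μ : Measure Ω} [IsProbabilityMeasure μ] {n : ℕ}
  {X : Fin n → Ω → ℝ}

lemma Good.int (h : Good μ X) (i : Fin n) : Integrable (X i) μ := (h.l2 i).integrable (by norm_num)

lemma Good.intsq (h : Good μ X) (i : Fin n) : Integrable (fun ω => X i ω ^ 2) μ := (h.l2 i).integrable_sq

lemma Good.ssmeas (h : Good μ X) (s : Finset (Fin n)) : Measurable (SS X s) := by
  have := h.meas
  unfold SS
  fun_prop

lemma Good.ssle (h : Good μ X) (s : Finset (Fin n)) (ω : Ω) : SS X s ω ≤ n := by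
  unfold SS
  calc ∑ j ∈ s, X j ω ≤ ∑ j ∈ s, (1 : ℝ) := Finset.sum_le_sum fun j _ => h.le_one j ω
    _ = s.card := by simp
    _ ≤ n := by
      have := Finset.card_le_univ s
      rw [Fintype.card_fin] at this
      exact_mod_cast this

lemma Good.var_s (h : Good μ X) (s : Finset (Fin n)) : ∑ i ∈ s, ∫ ω, X i ω ^ 2 ∂μ ≤ 1 :=
  (Finset.sum_le_univ_sum_of_nonneg fun i => integral_nonneg fun ω => sq_nonneg _).trans h.var

lemma Good.expint (h : Good μ X) (s : Finset (Fin n)) : Integrable (fun ω => Real.exp (SS X s ω)) μ := by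
  refine Integrable.of_bound ((Real.measurable_exp.comp (h.ssmeas s)).aestronglyMeasurable) (Real.exp n) ?_
  refine Filter.Eventually.of_forall fun ω => ?_
  rw [Real.norm_eq_abs, abs_of_pos (Real.exp_pos _)]
  exact Real.exp_le_exp.2 (h.ssle s ω)

lemma Good.mgf_le (h : Good μ X) (s : Finset (Fin n)) : ∫ ω, Real.exp (SS X s ω) ∂μ ≤ Real.exp 1 := by
  have h1 := h.indep.mgf_sum (t := 1) h.meas s
  have h2 : mgf (∑ i ∈ s, X i) μ 1 = ∫ ω, Real.exp (SS X s ω) ∂μ := by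
    unfold mgf SS
    simp
  rw [← h2, h1]
  calc ∏ i ∈ s, mgf (X i) μ 1 ≤ ∏ i ∈ s, Real.exp (∫ ω, X i ω ^ 2 ∂μ) := by
        refine Finset.prod_le_prod (fun i _ => mgf_nonneg) fun i _ => ?_
        have h3 : mgf (X i) μ 1 ≤ 1 + ∫ ω, X i ω ∂μ + ∫ ω, X i ω ^ 2 ∂μ := by
          have e : 1 + ∫ ω, X i ω ∂μ + ∫ ω, X i ω ^ 2 ∂μ = ∫ ω, (1 + X i ω + X i ω ^ 2) ∂μ := by
            rw [integral_add (by exact (integrable_const 1).add (h.int i)) (h.intsq i),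
              integral_add (integrable_const 1) (h.int i)]
            simp
          rw [e]
          unfold mgf
          refine integral_mono_of_nonneg (Filter.Eventually.of_forall fun ω => (Real.exp_pos _).le)
            (((integrable_const 1).add (h.int i)).add (h.intsq i)) (Filter.Eventually.of_forall fun ω => ?_)
          simp only [one_mul]
          exact exp_le_quad (h.le_one i ω)
        have h4 := h.mean i
        have h5 := Real.add_one_le_exp (∫ ω, X i ω ^ 2 ∂μ)
        linarith
    _ = Real.exp (∑ i ∈ s, ∫ ω, X i ω ^ 2 ∂μ) := (Real.exp_sum _ _).symm
    _ ≤ Real.exp 1 := Real.exp_le_exp.2 (h.var_s s)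

lemma Good.mgf3 (h : Good μ X) (s : Finset (Fin n)) : ∫ ω, Real.exp (SS X s ω) ∂μ ≤ 3 :=
  (h.mgf_le s).trans (by linarith [Real.exp_one_lt_d9])

lemma Good.indep_ss (h : Good μ X) {s : Finset (Fin n)} {i : Fin n} (hi : i ∉ s) :
    IndepFun (X i) (SS X s) μ := by
  have := (h.indep.indepFun_finsetSum_of_notMem h.meas hi).symm
  have e : SS X s = ∑ j ∈ s, X j := by
    ext ω; simp [SS]
  rw [e]; exact this

/-! ## Concentration inequality -/

/-- Test function of the concentration inequality. -/
noncomputable def cf (a d L w : ℝ) : ℝ := Real.exp (w / 2) * min (max (w - a + d) 0) L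

lemma cf_cont (a d L : ℝ) : Continuous (cf a d L) := by
  unfold cf; fun_prop

lemma cf_nonneg {a d L : ℝ} (hL : 0 ≤ L) (w : ℝ) : 0 ≤ cf a d L w := by
  unfold cf
  exact mul_nonneg (Real.exp_pos _).le (le_min (le_max_right _ _) hL)

lemma cf_le (a d L w : ℝ) : cf a d L w ≤ Real.exp (w / 2) * L :=
  mul_le_mul_of_nonneg_left (min_le_right _ _) (Real.exp_pos _).le

lemma cf_mono {a d L : ℝ} (hL : 0 ≤ L) : Monotone (cf a d L) := by
  intro u v h
  unfold cf
  refine mul_le_mul (Real.exp_le_exp.2 (by linarith)) ?_ (le_min (le_max_right _ _) hL) (Real.exp_pos _).le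
  gcongr

lemma cf_mul_nonneg {a d L : ℝ} (hL : 0 ≤ L) (v x : ℝ) : 0 ≤ x * (cf a d L v - cf a d L (v - x)) := by
  rcases le_total 0 x with h | h
  · exact mul_nonneg h (sub_nonneg.2 (cf_mono hL (by linarith)))
  · exact mul_nonneg_of_nonpos_of_nonpos h (sub_nonpos.2 (cf_mono hL (by linarith)))

lemma cf_in {a b d w : ℝ} (h1 : a - d ≤ w) (h2 : w ≤ b + d) :
    cf a d (b - a + 2 * d) w = Real.exp (w / 2) * (w - a + d) := by
  unfold cf
  rw [max_eq_left (by linarith), min_eq_left (by linarith)]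

lemma cf_inc {a b d u v : ℝ} (hd : 0 < d) (hab : a ≤ b) (h1 : a - d ≤ u) (h2 : v ≤ b + d) (huv : u ≤ v) :
    Real.exp ((a - d) / 2) * (v - u) ≤ cf a d (b - a + 2 * d) v - cf a d (b - a + 2 * d) u := by
  rw [cf_in h1 (by linarith), cf_in (by linarith) h2]
  have e1 : Real.exp (u / 2) ≤ Real.exp (v / 2) := Real.exp_le_exp.2 (by linarith)
  have e2 : Real.exp ((a - d) / 2) ≤ Real.exp (u / 2) := Real.exp_le_exp.2 (by linarith)
  nlinarith

lemma cf_main {a b d v x : ℝ} (hd : 0 < d) (hab : a ≤ b) (h1 : a ≤ v) (h2 : v ≤ b) :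
    Real.exp ((a - d) / 2) * (|x| * min |x| d) ≤
      x * (cf a d (b - a + 2 * d) v - cf a d (b - a + 2 * d) (v - x)) := by
  have hL : 0 ≤ b - a + 2 * d := by linarith
  set m := min |x| d with hm
  have hmd : m ≤ d := min_le_right _ _
  have hmx : m ≤ |x| := min_le_left _ _
  have hm0 : 0 ≤ m := le_min (abs_nonneg _) hd.le
  rcases le_total 0 x with h | h
  · rw [abs_of_nonneg h] at *
    have i1 := cf_inc (v := v) (u := v - m) hd hab (by linarith) (by linarith) (by linarith)
    have i2 : cf a d (b - a + 2 * d) (v - x) ≤ cf a d (b - a + 2 * d) (v - m) := cf_mono hL (by linarith)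
    rw [show v - (v - m) = m by ring] at i1
    nlinarith
  · rw [abs_of_nonpos h] at *
    have i1 := cf_inc (v := v + m) (u := v) hd hab (by linarith) (by linarith) (by linarith)
    have i2 : cf a d (b - a + 2 * d) (v + m) ≤ cf a d (b - a + 2 * d) (v - x) := cf_mono hL (by linarith)
    rw [show (v + m) - v = m by ring] at i1
    nlinarith

lemma cf_id_le {a d L : ℝ} (hL : 0 ≤ L) (v : ℝ) : v * cf a d L v ≤ L * Real.exp v := by
  have h0 := cf_nonneg (a := a) (d := d) hL v
  have h1 := cf_le a d L v
  have h2 := id_le_exp_half v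
  have h3 : Real.exp v = Real.exp (v / 2) * Real.exp (v / 2) := by rw [← Real.exp_add]; congr 1; ring
  have h4 := Real.exp_pos (v / 2)
  calc v * cf a d L v ≤ Real.exp (v / 2) * cf a d L v := mul_le_mul_of_nonneg_right h2 h0
    _ ≤ Real.exp (v / 2) * (Real.exp (v / 2) * L) := mul_le_mul_of_nonneg_left h1 h4.le
    _ = L * Real.exp v := by rw [h3]; ring

lemma exp_half_le (v : ℝ) : Real.exp (v / 2) ≤ (1 + Real.exp v) / 2 := by
  have h3 : Real.exp v = Real.exp (v / 2) * Real.exp (v / 2) := by rw [← Real.exp_add]; congr 1; ring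
  nlinarith [sq_nonneg (Real.exp (v / 2) - 1)]

lemma eta_lower {x d : ℝ} (hd : 0 < d) (hd1 : d ≤ 1 / 4) :
    x ^ 2 - x ^ 2 * min |x| 1 / (4 * d) ≤ |x| * min |x| d := by
  rw [← sq_abs]
  set y := |x| with hy
  have hy0 : 0 ≤ y := abs_nonneg x
  rw [sub_le_iff_le_add, ← sub_le_iff_le_add', le_div_iff₀ (by linarith)]
  rcases le_total y d with h1 | h1
  · rw [min_eq_left h1, min_eq_left (by linarith)]
    have : y ^ 2 - y * y = 0 := by ring
    rw [this, zero_mul]; positivity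
  · rw [min_eq_right h1]
    rcases le_total y 1 with h2 | h2
    · rw [min_eq_left h2]
      nlinarith [mul_nonneg hy0 (sq_nonneg (y - 2 * d))]
    · rw [min_eq_right h2]
      nlinarith [mul_nonneg hy0 hd.le, mul_nonneg (mul_nonneg hy0 hd.le) hd.le, sq_nonneg y]

lemma Good.tint (h : Good μ X) (i : Fin n) : Integrable (fun ω => X i ω ^ 2 * min |X i ω| 1) μ := by
  have := h.meas i
  refine (h.intsq i).mul_bdd (c := 1) (Measurable.aestronglyMeasurable (by fun_prop)) ?_
  refine Filter.Eventually.of_forall fun ω => ?_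
  rw [Real.norm_eq_abs, abs_of_nonneg (le_min (abs_nonneg _) zero_le_one)]
  exact min_le_right _ _

lemma Good.cfint (h : Good μ X) {a d L : ℝ} (hL : 0 ≤ L) (s : Finset (Fin n)) (ω : Ω) :
    ‖cf a d L (SS X s ω)‖ ≤ Real.exp (n / 2) * L := by
  rw [Real.norm_eq_abs, abs_of_nonneg (cf_nonneg hL _)]
  refine (cf_le _ _ _ _).trans ?_
  have := h.ssle s ω
  gcongr

lemma SS_sub {s : Finset (Fin n)} {j : Fin n} (hj : j ∈ s) (ω : Ω) :
    SS X s ω - X j ω = SS X (s.erase j) ω := by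
  unfold SS
  rw [← Finset.add_sum_erase s _ hj]; ring

lemma Good.conc_stein (h : Good μ X) {s : Finset (Fin n)} {a d L δ : ℝ} (hL : 0 ≤ L)
    (hδ : δ ≤ 1 / 1000) (hmean : ∑ j ∈ s, -∫ ω, X j ω ∂μ ≤ δ) :
    Integrable (fun ω => ∑ j ∈ s, X j ω * (cf a d L (SS X s ω) - cf a d L (SS X s ω - X j ω))) μ ∧
    ∫ ω, ∑ j ∈ s, X j ω * (cf a d L (SS X s ω) - cf a d L (SS X s ω - X j ω)) ∂μ ≤ 4 * L := by
  have hi1 : ∀ j ∈ s, Integrable (fun ω => X j ω * cf a d L (SS X s ω)) μ := fun j _ =>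
    (h.int j).mul_bdd (((cf_cont a d L).measurable.comp (h.ssmeas s)).aestronglyMeasurable)
      (Filter.Eventually.of_forall fun ω => h.cfint hL s ω)
  have hi2 : ∀ j ∈ s, Integrable (fun ω => X j ω * cf a d L (SS X s ω - X j ω)) μ := fun j hj => by
    simp only [SS_sub hj]
    exact (h.int j).mul_bdd (((cf_cont a d L).measurable.comp (h.ssmeas _)).aestronglyMeasurable)
      (Filter.Eventually.of_forall fun ω => h.cfint hL _ ω)
  have e : (fun ω => ∑ j ∈ s, X j ω * (cf a d L (SS X s ω) - cf a d L (SS X s ω - X j ω)))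
      = fun ω => ∑ j ∈ s, X j ω * cf a d L (SS X s ω) - ∑ j ∈ s, X j ω * cf a d L (SS X s ω - X j ω) := by
    ext ω
    rw [← Finset.sum_sub_distrib]
    exact Finset.sum_congr rfl fun j _ => by ring
  have I1 := integrable_finsetSum s hi1
  have I2 := integrable_finsetSum s hi2
  rw [e]
  refine ⟨I1.sub I2, ?_⟩
  rw [integral_sub I1 I2]
  have b1 : ∫ ω, ∑ j ∈ s, X j ω * cf a d L (SS X s ω) ∂μ ≤ 3 * L := by
    have : ∫ ω, ∑ j ∈ s, X j ω * cf a d L (SS X s ω) ∂μ ≤ ∫ ω, L * Real.exp (SS X s ω) ∂μ := by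
      refine integral_mono I1 ((h.expint s).const_mul L) fun ω => ?_
      simp only []
      rw [← Finset.sum_mul]
      exact cf_id_le hL _
    rw [integral_const_mul] at this
    have := h.mgf3 s
    nlinarith
  have b2 : -∫ ω, ∑ j ∈ s, X j ω * cf a d L (SS X s ω - X j ω) ∂μ ≤ 2 * L * δ := by
    rw [integral_finsetSum s hi2, ← Finset.sum_neg_distrib]
    calc ∑ j ∈ s, -∫ ω, X j ω * cf a d L (SS X s ω - X j ω) ∂μ
        ≤ ∑ j ∈ s, (-∫ ω, X j ω ∂μ) * (2 * L) := by
          refine Finset.sum_le_sum fun j hj => ?_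
          simp only [SS_sub hj]
          have := (h.indep_ss (Finset.notMem_erase j s)).integral_fun_comp_mul_comp
            (f := id) (g := cf a d L) (h.meas j).aemeasurable (h.ssmeas _).aemeasurable
            (measurable_id.aestronglyMeasurable) ((cf_cont a d L).measurable.aestronglyMeasurable)
          simp only [id] at this
          rw [this, ← neg_mul]
          refine mul_le_mul_of_nonneg_left ?_ (by linarith [h.mean j])
          have hx := h.expint (s.erase j)
          calc ∫ ω, cf a d L (SS X (s.erase j) ω) ∂μ ≤ ∫ ω, L / 2 * (1 + Real.exp (SS X (s.erase j) ω)) ∂μ := by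
                refine integral_mono_of_nonneg (Filter.Eventually.of_forall fun ω => cf_nonneg hL _)
                  (((integrable_const 1).add hx).const_mul _) (Filter.Eventually.of_forall fun ω => ?_)
                have h1 := cf_le a d L (SS X (s.erase j) ω)
                have h2 := exp_half_le (SS X (s.erase j) ω)
                simp only []
                nlinarith
            _ = L / 2 * (1 + ∫ ω, Real.exp (SS X (s.erase j) ω) ∂μ) := by
                rw [integral_const_mul, integral_add (integrable_const 1) hx]; simp
            _ ≤ 2 * L := by
                have := h.mgf3 (s.erase j)
                nlinarith
      _ = (∑ j ∈ s, -∫ ω, X j ω ∂μ) * (2 * L) := by rw [Finset.sum_mul]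
      _ ≤ 2 * L * δ := by nlinarith
  nlinarith

lemma Good.conc (h : Good μ X) {s : Finset (Fin n)} {δ : ℝ} (hδ0 : 0 < δ) (hδ : δ ≤ 1 / 1000)
    (hmean : ∑ j ∈ s, -∫ ω, X j ω ∂μ ≤ δ)
    (ht : ∑ j ∈ s, ∫ ω, X j ω ^ 2 * min |X j ω| 1 ∂μ ≤ δ)
    (hv : 97 / 100 ≤ ∑ j ∈ s, ∫ ω, X j ω ^ 2 ∂μ) {a b : ℝ} (hab : a ≤ b) :
    ∫ ω, (if a ≤ SS X s ω ∧ SS X s ω ≤ b then (1 : ℝ) else 0) ∂μ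
      ≤ Real.exp (-a / 2) * (9 * (b - a) + 32 * δ) := by
  set L := b - a + 2 * δ with hLdef
  have hL : 0 ≤ L := by linarith
  obtain ⟨I1, J1⟩ := h.conc_stein (a := a) (d := δ) hL hδ hmean
  set A : Ω → ℝ := fun ω => ∑ j ∈ s, X j ω * (cf a δ L (SS X s ω) - cf a δ L (SS X s ω - X j ω)) with hA
  set η : Fin n → Ω → ℝ := fun j ω => |X j ω| * min |X j ω| δ with hη
  have hηm : ∀ j, Measurable (η j) := fun j => by
    have := h.meas j
    simp only [hη]; fun_prop
  have hη0 : ∀ j ω, 0 ≤ η j ω := fun j ω => mul_nonneg (abs_nonneg _) (le_min (abs_nonneg _) hδ0.le)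
  have hηle : ∀ j ω, η j ω ≤ δ * |X j ω| := fun j ω => by
    simp only [hη]
    have := min_le_right |X j ω| δ
    have := abs_nonneg (X j ω)
    nlinarith
  have hηL2 : ∀ j, MemLp (η j) 2 μ := fun j => by
    refine MemLp.of_le ((h.l2 j).const_mul δ) (hηm j).aestronglyMeasurable (Filter.Eventually.of_forall fun ω => ?_)
    rw [Real.norm_eq_abs, abs_of_nonneg (hη0 j ω), Real.norm_eq_abs, abs_mul, abs_of_pos hδ0]
    exact hηle j ω
  set S : Ω → ℝ := ∑ j ∈ s, η j with hS
  have hSL2 : MemLp S 2 μ := memLp_finsetSum' _ fun j _ => hηL2 j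
  set m := ∫ ω, S ω ∂μ with hm
  have hm_ge : 72 / 100 ≤ m := by
    have e1 : m = ∑ j ∈ s, ∫ ω, η j ω ∂μ := by
      rw [hm, hS]
      simp only [Finset.sum_apply]
      exact integral_finsetSum s fun j _ => (hηL2 j).integrable (by norm_num)
    have e2 : ∀ j ∈ s, ∫ ω, X j ω ^ 2 ∂μ - (∫ ω, X j ω ^ 2 * min |X j ω| 1 ∂μ) / (4 * δ) ≤ ∫ ω, η j ω ∂μ := by
      intro j _
      rw [← integral_div, ← integral_sub (h.intsq j) ((h.tint j).div_const _)]
      exact integral_mono ((h.intsq j).sub ((h.tint j).div_const _)) ((hηL2 j).integrable (by norm_num))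
        fun ω => eta_lower hδ0 (by linarith)
    have e3 := Finset.sum_le_sum e2
    rw [Finset.sum_sub_distrib, ← Finset.sum_div] at e3
    have e4 : (∑ j ∈ s, ∫ ω, X j ω ^ 2 * min |X j ω| 1 ∂μ) / (4 * δ) ≤ 1 / 4 := by
      rw [div_le_iff₀ (by linarith)]; linarith
    rw [e1]; linarith
  have hSint : Integrable (fun ω => (S ω - m) ^ 2) μ := (hSL2.sub (memLp_const m)).integrable_sq
  have hvarS : ∫ ω, (S ω - m) ^ 2 ∂μ ≤ δ ^ 2 := by
    rw [hm, ← variance_eq_integral hSL2.aemeasurable, hS, IndepFun.variance_sum (fun j _ => hηL2 j)]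
    · calc ∑ j ∈ s, variance (η j) μ ≤ ∑ j ∈ s, δ ^ 2 * ∫ ω, X j ω ^ 2 ∂μ := by
            refine Finset.sum_le_sum fun j _ => ?_
            refine (variance_le_expectation_sq (hηm j).aestronglyMeasurable).trans ?_
            rw [← integral_const_mul]
            refine integral_mono (hηL2 j).integrable_sq ((h.intsq j).const_mul _) fun ω => ?_
            have h1 := hηle j ω
            have h2 := hη0 j ω
            simp only [Pi.pow_apply]
            rw [← sq_abs (X j ω), ← mul_pow]
            exact pow_le_pow_left₀ h2 h1 2
        _ = δ ^ 2 * ∑ j ∈ s, ∫ ω, X j ω ^ 2 ∂μ := by rw [Finset.mul_sum]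
        _ ≤ δ ^ 2 := by
            have := h.var_s s
            nlinarith [sq_nonneg δ]
    · intro i _ j _ hij
      exact (h.indep.indepFun hij).comp (φ := fun x => |x| * min |x| δ) (ψ := fun x => |x| * min |x| δ)
        (by fun_prop) (by fun_prop)
  have hexp := h.expint s
  have hpt : ∀ ω, (if a ≤ SS X s ω ∧ SS X s ω ≤ b then (1 : ℝ) else 0)
      ≤ 2 * Real.exp ((δ - a) / 2) * A ω
        + Real.exp (-a / 2) / 2 * (δ * Real.exp (SS X s ω) + 25 / δ * (S ω - m) ^ 2) := by
    intro ω
    have hA0 : 0 ≤ A ω := Finset.sum_nonneg fun j _ => cf_mul_nonneg hL _ _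
    have hp1 : 0 ≤ 2 * Real.exp ((δ - a) / 2) * A ω := by positivity
    have hp2 : 0 ≤ Real.exp (-a / 2) / 2 * (δ * Real.exp (SS X s ω) + 25 / δ * (S ω - m) ^ 2) := by positivity
    split_ifs with hin
    · obtain ⟨h1, h2⟩ := hin
      rcases le_or_gt (1 / 2) (S ω) with hs | hs
      · have hAS : Real.exp ((a - δ) / 2) * S ω ≤ A ω := by
          rw [hS, Finset.sum_apply, Finset.mul_sum]
          exact Finset.sum_le_sum fun j _ => cf_main hδ0 hab h1 h2
        have hee : Real.exp ((δ - a) / 2) * Real.exp ((a - δ) / 2) = 1 := by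
          rw [← Real.exp_add, show (δ - a) / 2 + (a - δ) / 2 = 0 by ring, Real.exp_zero]
        have h3 : 1 ≤ 2 * Real.exp ((δ - a) / 2) * A ω := by
          calc (1 : ℝ) ≤ 2 * S ω := by linarith
            _ = 2 * (Real.exp ((δ - a) / 2) * Real.exp ((a - δ) / 2)) * S ω := by rw [hee]; ring
            _ = 2 * Real.exp ((δ - a) / 2) * (Real.exp ((a - δ) / 2) * S ω) := by ring
            _ ≤ _ := mul_le_mul_of_nonneg_left hAS (by positivity)
        linarith
      · have h3 : 1 ≤ 25 * (S ω - m) ^ 2 := by nlinarith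
        have h4 : Real.exp (a / 2) * 2 ≤ δ * Real.exp (SS X s ω) + 25 / δ * (S ω - m) ^ 2 := by
          have h5 : 1 / δ ≤ 25 / δ * (S ω - m) ^ 2 := by
            rw [div_mul_eq_mul_div]; gcongr
          have h6 : Real.exp (SS X s ω) = Real.exp (SS X s ω / 2) ^ 2 := by
            rw [← Real.exp_nat_mul]; congr 1; push_cast; ring
          have h7 : 2 * Real.exp (SS X s ω / 2) ≤ δ * Real.exp (SS X s ω / 2) ^ 2 + 1 / δ := by
            have : δ * Real.exp (SS X s ω / 2) ^ 2 + 1 / δ - 2 * Real.exp (SS X s ω / 2)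
              = (δ * Real.exp (SS X s ω / 2) - 1) ^ 2 / δ := by
              field_simp; ring
            have h8 : 0 ≤ (δ * Real.exp (SS X s ω / 2) - 1) ^ 2 / δ := by positivity
            linarith
          have h9 : Real.exp (a / 2) ≤ Real.exp (SS X s ω / 2) := Real.exp_le_exp.2 (by linarith)
          rw [h6]; linarith
        have hee : Real.exp (-a / 2) * Real.exp (a / 2) = 1 := by
          rw [← Real.exp_add, show -a / 2 + a / 2 = 0 by ring, Real.exp_zero]
        have h10 := mul_le_mul_of_nonneg_left h4 (show 0 ≤ Real.exp (-a / 2) / 2 by positivity)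
        nlinarith
    · linarith
  have hint2 : Integrable (fun ω => δ * Real.exp (SS X s ω) + 25 / δ * (S ω - m) ^ 2) μ :=
    (hexp.const_mul δ).add (hSint.const_mul _)
  have hmono := integral_mono_of_nonneg (μ := μ) (Filter.Eventually.of_forall fun ω => by
      show (0 : ℝ) ≤ (if a ≤ SS X s ω ∧ SS X s ω ≤ b then (1 : ℝ) else 0)
      split_ifs <;> norm_num)
    ((I1.const_mul (2 * Real.exp ((δ - a) / 2))).add (hint2.const_mul (Real.exp (-a / 2) / 2)))
    (Filter.Eventually.of_forall hpt)
  refine hmono.trans ?_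
  simp only [Pi.add_apply]
  rw [integral_add (I1.const_mul _) (hint2.const_mul _), integral_const_mul, integral_const_mul,
    integral_add (hexp.const_mul δ) (hSint.const_mul _), integral_const_mul, integral_const_mul]
  have hm3 := h.mgf3 s
  have hs1 : Real.exp ((δ - a) / 2) ≤ Real.exp (-a / 2) * (101 / 100) := by
    rw [show (δ - a) / 2 = -a / 2 + δ / 2 by ring, Real.exp_add]
    refine mul_le_mul_of_nonneg_left ?_ (Real.exp_pos _).le
    have := exp_le_quad (x := δ / 2) (by linarith)
    nlinarith
  have q1 : 2 * Real.exp ((δ - a) / 2) * ∫ ω, A ω ∂μ ≤ Real.exp (-a / 2) * (9 * L) := by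
    calc 2 * Real.exp ((δ - a) / 2) * ∫ ω, A ω ∂μ ≤ 2 * Real.exp ((δ - a) / 2) * (4 * L) :=
          mul_le_mul_of_nonneg_left J1 (by positivity)
      _ ≤ 2 * (Real.exp (-a / 2) * (101 / 100)) * (4 * L) := by gcongr
      _ ≤ Real.exp (-a / 2) * (9 * L) := by nlinarith [mul_nonneg (Real.exp_pos (-a / 2)).le hL]
  have q2 : δ * ∫ ω, Real.exp (SS X s ω) ∂μ + 25 / δ * ∫ ω, (S ω - m) ^ 2 ∂μ ≤ 28 * δ := by
    have h1 : 25 / δ * ∫ ω, (S ω - m) ^ 2 ∂μ ≤ 25 / δ * δ ^ 2 :=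
      mul_le_mul_of_nonneg_left hvarS (by positivity)
    have h2 : 25 / δ * δ ^ 2 = 25 * δ := by field_simp
    nlinarith
  have q3 := mul_le_mul_of_nonneg_left q2 (show 0 ≤ Real.exp (-a / 2) / 2 by positivity)
  rw [hLdef] at q1
  nlinarith

end prob

/-! ## Stein's method for the truncated sum -/

section main

variable {Ω : Type*} [MeasurableSpace Ω] {μ : Measure Ω} [IsProbabilityMeasure μ] {n : ℕ}
  {X : Fin n → Ω → ℝ}

lemma fub {A B : Ω → ℝ} (hA : Measurable A) (hB : Measurable B) (hAB : IndepFun A B μ)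
    {h : ℝ → ℝ → ℝ} (hm : Measurable (Function.uncurry h)) (hInt : Integrable (fun ω => h (A ω) (B ω)) μ)
    {k : ℝ → ℝ} (hk : Measurable k) (hki : Integrable (fun ω => k (A ω)) μ)
    (hle : ∀ x, ∫ ω, h x (B ω) ∂μ ≤ k x) :
    ∫ ω, h (A ω) (B ω) ∂μ ≤ ∫ ω, k (A ω) ∂μ := by
  have e := (indepFun_iff_map_prod_eq_prod_map_map hA.aemeasurable hB.aemeasurable).1 hAB
  have hpm : Measurable (fun ω => (A ω, B ω)) := hA.prodMk hB
  have := Measure.isProbabilityMeasure_map (μ := μ) hA.aemeasurable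
  have := Measure.isProbabilityMeasure_map (μ := μ) hB.aemeasurable
  have h1 : ∫ ω, h (A ω) (B ω) ∂μ = ∫ p, Function.uncurry h p ∂(μ.map fun ω => (A ω, B ω)) := by
    rw [integral_map hpm.aemeasurable hm.aestronglyMeasurable]
    rfl
  have h2 : Integrable (Function.uncurry h) ((μ.map A).prod (μ.map B)) := by
    rw [← e, integrable_map_measure hm.aestronglyMeasurable hpm.aemeasurable]
    exact hInt
  rw [h1, e, integral_prod _ h2]
  have h3 : ∫ ω, k (A ω) ∂μ = ∫ x, k x ∂(μ.map A) :=
    (integral_map hA.aemeasurable hk.aestronglyMeasurable).symm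
  rw [h3]
  refine integral_mono h2.integral_prod_left ?_ fun x => ?_
  · rw [integrable_map_measure hk.aestronglyMeasurable hA.aemeasurable]
    exact hki
  · simp only [Function.uncurry_apply_pair]
    rw [integral_map hB.aemeasurable]
    · exact hle x
    · exact (hm.comp (measurable_const.prodMk measurable_id)).aestronglyMeasurable

lemma BB_meas (z : ℝ) : Measurable (BB z) := by unfold BB; fun_prop

lemma HH_meas (z : ℝ) : Measurable (Function.uncurry (HH z)) := by
  have h1 := BB_meas z
  have : Function.uncurry (HH z) = fun p : ℝ × ℝ =>
      2 * min |p.1| 1 * BB z (p.2 + 1) + (if |p.2 - z| ≤ min |p.1| 1 then 1 else 0) := by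
    ext ⟨x, w⟩; rfl
  rw [this]
  refine Measurable.add (by fun_prop) ?_
  refine Measurable.ite ?_ measurable_const measurable_const
  exact measurableSet_le (by fun_prop) (by fun_prop)

lemma HH_nonneg (z x w : ℝ) : 0 ≤ HH z x w := by
  unfold HH
  have := BB_nonneg z (w + 1)
  have : 0 ≤ min |x| 1 := by positivity
  split_ifs <;> positivity

lemma HH_bdd (z x w c : ℝ) (hw : w ≤ c) : |HH z x w| ≤ 2 * BB z (c + 1) + 1 := by
  rw [abs_of_nonneg (HH_nonneg z x w)]
  unfold HH
  have h1 := BB_nonneg z (w + 1)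
  have h2 := BB_mono z (show w + 1 ≤ c + 1 by linarith)
  have h3 : min |x| 1 ≤ 1 := min_le_right _ _
  have h4 : 2 * min |x| 1 * BB z (w + 1) ≤ 2 * BB z (c + 1) := by nlinarith
  split_ifs <;> linarith

lemma fz'_meas (z : ℝ) : Measurable (fz' z) := by
  unfold fz'
  have := (fz_continuous z).measurable
  refine Measurable.sub (Measurable.add (by fun_prop) ?_) measurable_const
  exact Measurable.ite measurableSet_Iic measurable_const measurable_const

lemma Good.BB_int (h : Good μ X) (z : ℝ) (s : Finset (Fin n)) (c : ℝ) :
    Integrable (fun ω => BB z (SS X s ω + c)) μ := by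
  have := h.expint s
  have e : (fun ω => BB z (SS X s ω + c)) =
      fun ω => 4 * Real.exp (-z / 2) * (1 + Real.exp c * Real.exp (SS X s ω)) := by
    ext ω; unfold BB; rw [Real.exp_add, mul_comm (Real.exp (SS X s ω))]
  rw [e]
  exact ((integrable_const _).add (this.const_mul _)).const_mul _

lemma Good.BB_le (h : Good μ X) (z : ℝ) (s : Finset (Fin n)) (c : ℝ) :
    ∫ ω, BB z (SS X s ω + c) ∂μ ≤ 4 * Real.exp (-z / 2) * (1 + 3 * Real.exp c) := by
  have h1 := h.expint s
  have e : (fun ω => BB z (SS X s ω + c)) =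
      fun ω => 4 * Real.exp (-z / 2) * (1 + Real.exp c * Real.exp (SS X s ω)) := by
    ext ω; unfold BB; rw [Real.exp_add, mul_comm (Real.exp (SS X s ω))]
  rw [e, integral_const_mul, integral_add (integrable_const _) (h1.const_mul _), integral_const_mul]
  have h3 := h.mgf3 s
  have := Real.exp_pos c
  have := Real.exp_pos (-z / 2)
  simp only [integral_const, probReal_univ, smul_eq_mul, mul_one]
  have h5 : 1 + Real.exp c * ∫ ω, Real.exp (SS X s ω) ∂μ ≤ 1 + 3 * Real.exp c := by nlinarith
  exact mul_le_mul_of_nonneg_left h5 (by positivity)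

lemma Good.BB_le0 (h : Good μ X) (z : ℝ) (s : Finset (Fin n)) :
    ∫ ω, BB z (SS X s ω) ∂μ ≤ 16 * Real.exp (-z / 2) := by
  have := h.BB_le z s 0
  simp only [add_zero, Real.exp_zero] at this
  linarith

lemma Good.BB_int0 (h : Good μ X) (z : ℝ) (s : Finset (Fin n)) :
    Integrable (fun ω => BB z (SS X s ω)) μ := by
  have := h.BB_int z s 0
  simpa only [add_zero] using this

/-- The smallness hypotheses. -/
structure SmallAt {Ω : Type*} [MeasurableSpace Ω] (μ : Measure Ω) {n : ℕ} (X : Fin n → Ω → ℝ) (δ : ℝ) : Prop where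
  pos : 0 < δ
  le : δ ≤ 1 / 1000
  mean : ∑ j, -∫ ω, X j ω ∂μ ≤ δ
  third : ∑ j, ∫ ω, X j ω ^ 2 * min |X j ω| 1 ∂μ ≤ δ
  var : 1 - δ ≤ ∑ j, ∫ ω, X j ω ^ 2 ∂μ

lemma Good.tint' (h : Good μ X) (i : Fin n) : Integrable (fun ω => X i ω ^ 2 * min |X i ω| 1) μ := by
  refine (h.intsq i).mul_bdd (c := 1) ?_ ?_
  · have := h.meas i
    exact (show Measurable (fun ω => min |X i ω| 1) by fun_prop).aestronglyMeasurable
  · refine Filter.Eventually.of_forall fun ω => ?_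
    rw [Real.norm_eq_abs, abs_of_nonneg (by positivity)]
    exact min_le_right _ _

lemma Good.mint (h : Good μ X) (i : Fin n) : Integrable (fun ω => min |X i ω| 1) μ := by
  refine Integrable.of_bound (C := 1) ?_ ?_
  · have := h.meas i
    exact (show Measurable (fun ω => min |X i ω| 1) by fun_prop).aestronglyMeasurable
  · refine Filter.Eventually.of_forall fun ω => ?_
    rw [Real.norm_eq_abs, abs_of_nonneg (by positivity)]
    exact min_le_right _ _

lemma Good.t_nonneg (μ : Measure Ω) (X : Fin n → Ω → ℝ) (i : Fin n) : 0 ≤ ∫ ω, X i ω ^ 2 * min |X i ω| 1 ∂μ :=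
  integral_nonneg fun ω => by positivity

lemma Good.sig_le (h : Good μ X) {δ : ℝ} (hs : SmallAt μ X δ) (i : Fin n) :
    ∫ ω, X i ω ^ 2 ∂μ ≤ 2 / 100 := by
  have h1 : ∫ ω, X i ω ^ 2 ∂μ ≤ ∫ ω, (1 / 100 + 10 * (X i ω ^ 2 * min |X i ω| 1)) ∂μ := by
    refine integral_mono (h.intsq i) ((integrable_const _).add ((h.tint' i).const_mul _)) fun ω => ?_
    simp only
    rw [← sq_abs]
    set y := |X i ω|
    have hy : 0 ≤ y := abs_nonneg _
    rcases le_total y 1 with h2 | h2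
    · rw [min_eq_left h2]
      rcases le_total y (1 / 10) with h3 | h3
      · have : 0 ≤ y ^ 2 * y := by positivity
        nlinarith
      · nlinarith [sq_nonneg y, mul_nonneg (sq_nonneg y) (sub_nonneg.2 h3)]
    · rw [min_eq_right h2]; nlinarith [sq_nonneg y]
  rw [integral_add (integrable_const _) ((h.tint' i).const_mul _), integral_const_mul] at h1
  simp only [integral_const, probReal_univ, smul_eq_mul, one_mul] at h1
  have h2 : ∫ ω, X i ω ^ 2 * min |X i ω| 1 ∂μ ≤ ∑ j, ∫ ω, X j ω ^ 2 * min |X j ω| 1 ∂μ :=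
    Finset.single_le_sum (f := fun j => ∫ ω, X j ω ^ 2 * min |X j ω| 1 ∂μ)
      (fun j _ => Good.t_nonneg μ X j) (Finset.mem_univ i)
  linarith [hs.third, hs.le]

lemma Good.HH_le (h : Good μ X) {δ : ℝ} (hs : SmallAt μ X δ) (z : ℝ) (i : Fin n) (x : ℝ) :
    ∫ ω, HH z x (SS X (Finset.univ.erase i) ω) ∂μ ≤ 110 * Real.exp (-z / 2) * (min |x| 1 + δ) := by
  set s := (Finset.univ : Finset (Fin n)).erase i with hsdef
  set m := min |x| 1 with hm
  have hm0 : 0 ≤ m := by positivity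
  have hm1 : m ≤ 1 := min_le_right _ _
  have hc := h.conc (s := s) hs.pos hs.le ?_ ?_ ?_ (show z - m ≤ z + m by linarith)
  · have e : (fun ω => HH z x (SS X s ω)) = fun ω => 2 * m * BB z (SS X s ω + 1) +
        (if z - m ≤ SS X s ω ∧ SS X s ω ≤ z + m then (1 : ℝ) else 0) := by
      ext ω
      unfold HH
      have : |SS X s ω - z| ≤ min |x| 1 ↔ (z - m ≤ SS X s ω ∧ SS X s ω ≤ z + m) := by
        rw [abs_le, ← hm]
        constructor <;> rintro ⟨h1, h2⟩ <;> constructor <;> linarith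
      simp only [this]
      rfl
    rw [e, integral_add ((h.BB_int z s 1).const_mul _), integral_const_mul]
    · have hb := h.BB_le z s 1
      have he := Real.exp_one_lt_d9
      have hE := Real.exp_pos (-z / 2)
      have h5 : Real.exp (-(z - m) / 2) ≤ 1.65 * Real.exp (-z / 2) := by
        have h6 : Real.exp (-(z - m) / 2) = Real.exp (m / 2) * Real.exp (-z / 2) := by
          rw [← Real.exp_add]; congr 1; ring
        rw [h6]
        refine mul_le_mul_of_nonneg_right ?_ hE.le
        have h7 : Real.exp (m / 2) ≤ Real.exp (1 / 2) := Real.exp_le_exp.2 (by linarith)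
        have h8 : Real.exp 1 = Real.exp (1 / 2) * Real.exp (1 / 2) := by
          rw [← Real.exp_add]; norm_num
        have h9 : Real.exp (1 / 2) ≤ 1.65 := by
          by_contra hcon
          push Not at hcon
          nlinarith
        linarith
      have h10 : ∫ ω, BB z (SS X s ω + 1) ∂μ ≤ 36.8 * Real.exp (-z / 2) := by nlinarith
      have h11 : 2 * m * ∫ ω, BB z (SS X s ω + 1) ∂μ ≤ 2 * m * (36.8 * Real.exp (-z / 2)) :=
        mul_le_mul_of_nonneg_left h10 (by positivity)
      have h12 : Real.exp (-(z - m) / 2) * (9 * (z + m - (z - m)) + 32 * δ) ≤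
          1.65 * Real.exp (-z / 2) * (9 * (z + m - (z - m)) + 32 * δ) :=
        mul_le_mul_of_nonneg_right h5 (by linarith [hs.pos])
      have h13 := mul_nonneg hE.le hm0
      have h14 := mul_nonneg hE.le hs.pos.le
      nlinarith
    · refine Integrable.of_bound (C := 1) ?_ (Filter.Eventually.of_forall fun ω => ?_)
      · refine (Measurable.ite ?_ measurable_const measurable_const).aestronglyMeasurable
        exact (measurableSet_le measurable_const (h.ssmeas s)).inter (measurableSet_le (h.ssmeas s) measurable_const)
      · split_ifs <;> simp
  · refine le_trans ?_ hs.mean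
    exact Finset.sum_le_univ_sum_of_nonneg fun j => by linarith [h.mean j]
  · refine le_trans ?_ hs.third
    exact Finset.sum_le_univ_sum_of_nonneg fun j => Good.t_nonneg μ X j
  · have h1 := Finset.add_sum_erase Finset.univ (fun j => ∫ ω, X j ω ^ 2 ∂μ) (Finset.mem_univ i)
    rw [← hsdef] at h1
    have := h.sig_le hs i
    linarith [hs.var, hs.le]

lemma Good.uHH_int (h : Good μ X) (z : ℝ) (i : Fin n) {u : ℝ → ℝ}
    (hui : Integrable (fun ω => u (X i ω)) μ) :
    Integrable (fun ω => u (X i ω) * HH z (X i ω) (SS X (Finset.univ.erase i) ω)) μ := by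
  refine hui.mul_bdd (c := 2 * BB z (n + 1) + 1) ?_ ?_
  · have := (HH_meas z).comp ((h.meas i).prodMk (h.ssmeas (Finset.univ.erase i)))
    exact this.aestronglyMeasurable
  · refine Filter.Eventually.of_forall fun ω => ?_
    rw [Real.norm_eq_abs]
    exact HH_bdd _ _ _ _ (h.ssle _ ω)

lemma Good.uHH (h : Good μ X) {δ : ℝ} (hs : SmallAt μ X δ) (z : ℝ) (i : Fin n) {u : ℝ → ℝ}
    (hu : Measurable u) (hu0 : ∀ x, 0 ≤ u x) (hui : Integrable (fun ω => u (X i ω)) μ)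
    (hui2 : Integrable (fun ω => u (X i ω) * min |X i ω| 1) μ) :
    ∫ ω, u (X i ω) * HH z (X i ω) (SS X (Finset.univ.erase i) ω) ∂μ ≤
      110 * Real.exp (-z / 2) * (∫ ω, u (X i ω) * min |X i ω| 1 ∂μ + δ * ∫ ω, u (X i ω) ∂μ) := by
  have hk : Integrable (fun ω => u (X i ω) * (110 * Real.exp (-z / 2) * (min |X i ω| 1 + δ))) μ := by
    have e : (fun ω => u (X i ω) * (110 * Real.exp (-z / 2) * (min |X i ω| 1 + δ))) =
      fun ω => 110 * Real.exp (-z / 2) * (u (X i ω) * min |X i ω| 1 + δ * u (X i ω)) := by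
      ext ω; ring
    rw [e]
    exact (hui2.add (hui.const_mul _)).const_mul _
  have := fub (h.meas i) (h.ssmeas (Finset.univ.erase i)) (h.indep_ss (Finset.notMem_erase i _))
    (h := fun x y => u x * HH z x y) (k := fun x => u x * (110 * Real.exp (-z / 2) * (min |x| 1 + δ)))
    ?_ (h.uHH_int z i hui) (by fun_prop) hk ?_
  · refine this.trans (le_of_eq ?_)
    rw [← integral_const_mul δ, ← integral_add hui2 (hui.const_mul _), ← integral_const_mul]
    congr 1
    ext ω; ring
  · have h1 := HH_meas z
    exact (hu.comp measurable_fst).mul h1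
  · intro x
    rw [integral_const_mul]
    exact mul_le_mul_of_nonneg_left (h.HH_le hs z i x) (hu0 x)

lemma Good.assoc (h : Good μ X) (i : Fin n) :
    (∫ ω, X i ω ^ 2 ∂μ) * ∫ ω, min |X i ω| 1 ∂μ ≤ ∫ ω, X i ω ^ 2 * min |X i ω| 1 ∂μ := by
  set v := ∫ ω, X i ω ^ 2 ∂μ with hv
  have hv0 : 0 ≤ v := integral_nonneg fun ω => sq_nonneg _
  set c := min (Real.sqrt v) 1
  have h1 : 0 ≤ ∫ ω, (X i ω ^ 2 * min |X i ω| 1 - c * X i ω ^ 2 - (v * min |X i ω| 1 - v * c)) ∂μ := by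
    refine integral_nonneg fun ω => ?_
    simp only [Pi.zero_apply]
    have e : X i ω ^ 2 * min |X i ω| 1 - c * X i ω ^ 2 - (v * min |X i ω| 1 - v * c) =
      (X i ω ^ 2 - v) * (min |X i ω| 1 - c) := by ring
    rw [e, ← sq_abs]
    have hs : Real.sqrt v ^ 2 = v := Real.sq_sqrt hv0
    have hs0 := Real.sqrt_nonneg v
    rcases le_total |X i ω| (Real.sqrt v) with h2 | h2
    · have h3 : min |X i ω| 1 ≤ c := min_le_min_right _ h2
      have h4 : |X i ω| ^ 2 ≤ v := by rw [← hs]; gcongr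
      nlinarith
    · have h3 : c ≤ min |X i ω| 1 := min_le_min_right _ h2
      have h4 : v ≤ |X i ω| ^ 2 := by rw [← hs]; gcongr
      nlinarith
  rw [integral_sub, integral_sub, integral_sub, integral_const_mul, integral_const_mul] at h1
  · simp only [integral_const, probReal_univ, smul_eq_mul, one_mul] at h1
    rw [← hv] at h1
    linarith
  · exact (h.mint i).const_mul _
  · exact integrable_const _
  · exact h.tint' i
  · exact (h.intsq i).const_mul _
  · exact (h.tint' i).sub ((h.intsq i).const_mul _)
  · exact ((h.mint i).const_mul _).sub (integrable_const _)

lemma Good.bint (h : Good μ X) (z : ℝ) (s : Finset (Fin n)) {g : ℝ → ℝ} (hg : Measurable g)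
    (hb : ∀ w, |g w| ≤ BB z w) : Integrable (fun ω => g (SS X s ω)) μ := by
  refine (h.BB_int0 z s).mono' (hg.comp (h.ssmeas s)).aestronglyMeasurable ?_
  exact Filter.Eventually.of_forall fun ω => hb (SS X s ω)

lemma Good.ble (h : Good μ X) (z : ℝ) (s : Finset (Fin n)) {g : ℝ → ℝ} 
    (hb : ∀ w, |g w| ≤ BB z w) : |∫ ω, g (SS X s ω) ∂μ| ≤ 16 * Real.exp (-z / 2) := by
  refine le_trans ?_ (h.BB_le0 z s)
  exact norm_integral_le_of_norm_le (f := fun ω => g (SS X s ω)) (h.BB_int0 z s)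
    (Filter.Eventually.of_forall fun ω => hb (SS X s ω))

lemma Good.bmul (h : Good μ X) (z : ℝ) (s : Finset (Fin n)) {g : ℝ → ℝ} (hg : Measurable g)
    (hb : ∀ w, |g w| ≤ BB z w) {Y : Ω → ℝ} (hY : Integrable Y μ) :
    Integrable (fun ω => Y ω * g (SS X s ω)) μ := by
  refine hY.mul_bdd (c := BB z n) (hg.comp (h.ssmeas s)).aestronglyMeasurable ?_
  exact Filter.Eventually.of_forall fun ω => (hb _).trans (BB_mono z (h.ssle s ω))

lemma fz_abs {z : ℝ} (hz : 2 < z) (w : ℝ) : |fz z w| ≤ BB z w := by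
  rw [abs_of_nonneg (fz_nonneg hz w)]; exact fz_le hz w

lemma Good.term (h : Good μ X) {δ : ℝ} (hs : SmallAt μ X δ) {z : ℝ} (hz : 2 < z) (i : Fin n) :
    |(∫ ω, X i ω ^ 2 ∂μ) * (∫ ω, fz' z (SS X Finset.univ ω) ∂μ)
        - ∫ ω, X i ω * fz z (SS X Finset.univ ω) ∂μ| ≤
      Real.exp (-z / 2) * (220 * (∫ ω, X i ω ^ 2 * min |X i ω| 1 ∂μ + δ * ∫ ω, X i ω ^ 2 ∂μ)
        + 16 * (-∫ ω, X i ω ∂μ)) := by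
  set s := (Finset.univ : Finset (Fin n)).erase i with hsdef
  set v := ∫ ω, X i ω ^ 2 ∂μ with hv
  set t := ∫ ω, X i ω ^ 2 * min |X i ω| 1 ∂μ with ht
  have hv0 : 0 ≤ v := integral_nonneg fun ω => sq_nonneg _
  have hW : ∀ ω, SS X Finset.univ ω = SS X s ω + X i ω := fun ω => by
    rw [hsdef, ← SS_sub (Finset.mem_univ i)]; ring
  have hE := Real.exp_pos (-z / 2)
  have mf := (fz_continuous z).measurable
  have mf' := fz'_meas z
  have hind := h.indep_ss (s := s) (Finset.notMem_erase i _)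
  have i1 : ∫ ω, X i ω ^ 2 * fz' z (SS X s ω) ∂μ = v * ∫ ω, fz' z (SS X s ω) ∂μ :=
    hind.integral_fun_comp_mul_comp (f := fun x => x ^ 2) (g := fz' z) (h.meas i).aemeasurable
      (h.ssmeas s).aemeasurable (by fun_prop) mf'.aestronglyMeasurable
  have i2 : ∫ ω, X i ω * fz z (SS X s ω) ∂μ = (∫ ω, X i ω ∂μ) * ∫ ω, fz z (SS X s ω) ∂μ :=
    hind.integral_fun_comp_mul_comp (f := fun x => x) (g := fz z) (h.meas i).aemeasurable
      (h.ssmeas s).aemeasurable (by fun_prop) mf.aestronglyMeasurable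
  -- first difference
  have b1 : |∫ ω, fz' z (SS X Finset.univ ω) ∂μ - ∫ ω, fz' z (SS X s ω) ∂μ| ≤
      110 * Real.exp (-z / 2) * (∫ ω, min |X i ω| 1 ∂μ + δ) := by
    rw [← integral_sub (h.bint z _ mf' (fz'_le hz)) (h.bint z _ mf' (fz'_le hz))]
    have := h.uHH hs z i (u := fun _ => 1) measurable_const (fun _ => zero_le_one) (integrable_const _)
      (by simpa using h.mint i)
    simp only [one_mul, integral_const, probReal_univ, smul_eq_mul, mul_one] at this
    refine le_trans ?_ this
    rw [← Real.norm_eq_abs]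
    refine norm_integral_le_of_norm_le ?_ (Filter.Eventually.of_forall fun ω => ?_)
    · simpa using h.uHH_int z i (u := fun _ => 1) (integrable_const _)
    · rw [hW ω, Real.norm_eq_abs]
      exact HH_fz' hz (h.le_one i ω)
  -- remainder
  have b2 : |∫ ω, X i ω * (fz z (SS X Finset.univ ω) - fz z (SS X s ω) - X i ω * fz' z (SS X s ω)) ∂μ| ≤
      110 * Real.exp (-z / 2) * (t + δ * v) := by
    have := h.uHH hs z i (u := fun x => x ^ 2) (by fun_prop) (fun _ => sq_nonneg _) (h.intsq i) (h.tint' i)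
    refine le_trans ?_ this
    rw [← Real.norm_eq_abs]
    refine norm_integral_le_of_norm_le (h.uHH_int z i (u := fun x => x ^ 2) (h.intsq i))
      (Filter.Eventually.of_forall fun ω => ?_)
    rw [hW ω, Real.norm_eq_abs, abs_mul, ← sq_abs]
    have := HH_R (w := SS X s ω) hz (h.le_one i ω)
    calc _ ≤ |X i ω| * (|X i ω| * HH z (X i ω) (SS X s ω)) := mul_le_mul_of_nonneg_left this (abs_nonneg _)
      _ = _ := by ring
  have j0 := h.bmul z Finset.univ mf (fz_abs hz) (h.int i)
  have j1 := h.bmul z s mf (fz_abs hz) (h.int i)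
  have j2 := h.bmul z s mf' (fz'_le hz) (h.intsq i)
  have e : ∫ ω, X i ω * (fz z (SS X Finset.univ ω) - fz z (SS X s ω) - X i ω * fz' z (SS X s ω)) ∂μ =
      ∫ ω, X i ω * fz z (SS X Finset.univ ω) ∂μ - (∫ ω, X i ω ∂μ) * (∫ ω, fz z (SS X s ω) ∂μ)
        - v * ∫ ω, fz' z (SS X s ω) ∂μ := by
    rw [← i1, ← i2, ← integral_sub j0 j1, ← integral_sub (by exact j0.sub j1) j2]
    congr 1
    ext ω; ring
  rw [e] at b2
  have b3 := h.ble z s (fz_abs hz)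
  have ha := h.assoc i
  rw [← hv, ← ht] at ha
  have hm := h.mean i
  set I0 := ∫ ω, X i ω * fz z (SS X Finset.univ ω) ∂μ
  set EX := ∫ ω, X i ω ∂μ
  set F := ∫ ω, fz z (SS X s ω) ∂μ
  set F' := ∫ ω, fz' z (SS X s ω) ∂μ
  set G' := ∫ ω, fz' z (SS X Finset.univ ω) ∂μ
  set M := ∫ ω, min |X i ω| 1 ∂μ
  have e2 : v * G' - I0 = v * (G' - F') - EX * F - (I0 - EX * F - v * F') := by ring
  have c1 : |v * (G' - F')| ≤ 110 * Real.exp (-z / 2) * (t + δ * v) := by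
    rw [abs_mul, abs_of_nonneg hv0]
    refine (mul_le_mul_of_nonneg_left b1 hv0).trans ?_
    have : v * (110 * Real.exp (-z / 2) * (M + δ)) = 110 * Real.exp (-z / 2) * (v * M + δ * v) := by ring
    rw [this]
    gcongr
  have c2 : |EX * F| ≤ -EX * (16 * Real.exp (-z / 2)) := by
    rw [abs_mul, abs_of_nonpos hm]
    exact mul_le_mul_of_nonneg_left b3 (by linarith)
  rw [e2]
  calc _ ≤ |v * (G' - F')| + |EX * F| + |I0 - EX * F - v * F'| :=
        (abs_sub _ _).trans (add_le_add_left (abs_sub _ _) _)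
    _ ≤ 110 * Real.exp (-z / 2) * (t + δ * v) + -EX * (16 * Real.exp (-z / 2)) +
        110 * Real.exp (-z / 2) * (t + δ * v) := by gcongr
    _ = _ := by ring

lemma Good.main (h : Good μ X) {δ : ℝ} (hs : SmallAt μ X δ) {z : ℝ} (hz : 2 < z) :
    |(μ {ω | SS X Finset.univ ω ≤ z}).toReal - Phi z| ≤ 472 * Real.exp (-z / 2) * δ := by
  have mf := (fz_continuous z).measurable
  have mf' := fz'_meas z
  have hE := Real.exp_pos (-z / 2)
  have hmeas : MeasurableSet {ω | SS X Finset.univ ω ≤ z} :=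
    measurableSet_le (h.ssmeas _) measurable_const
  have hindi : Integrable (fun ω => Set.indicator {ω | SS X Finset.univ ω ≤ z} (1 : Ω → ℝ) ω) μ :=
    (integrable_const (1 : ℝ)).indicator hmeas
  have j0 := fun i => h.bmul z Finset.univ mf (fz_abs hz) (h.int i)
  have e1 : (μ {ω | SS X Finset.univ ω ≤ z}).toReal - Phi z =
      ∫ ω, fz' z (SS X Finset.univ ω) ∂μ - ∑ i, ∫ ω, X i ω * fz z (SS X Finset.univ ω) ∂μ := by
    have e2 : (μ {ω | SS X Finset.univ ω ≤ z}).toReal =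
        ∫ ω, Set.indicator {ω | SS X Finset.univ ω ≤ z} 1 ω ∂μ := by
      rw [integral_indicator_one hmeas]; rfl
    have e3 : Phi z = ∫ _, Phi z ∂μ := by simp
    rw [e2]
    nth_rewrite 1 [e3]
    rw [← integral_finsetSum _ (fun i _ => j0 i),
      ← integral_sub hindi (integrable_const _),
      ← integral_sub (h.bint z _ mf' (fz'_le hz)) (integrable_finsetSum _ (fun i _ => j0 i))]
    congr 1
    ext ω
    rw [← Finset.sum_mul]
    change _ = fz' z (SS X Finset.univ ω) - SS X Finset.univ ω * _
    unfold fz'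
    simp only [Set.indicator, Set.mem_ofPred_eq, Pi.one_apply]
    ring
  set G := ∫ ω, fz' z (SS X Finset.univ ω) ∂μ with hG
  have e4 : G - ∑ i, ∫ ω, X i ω * fz z (SS X Finset.univ ω) ∂μ =
      (1 - ∑ i, ∫ ω, X i ω ^ 2 ∂μ) * G +
      ∑ i, ((∫ ω, X i ω ^ 2 ∂μ) * G - ∫ ω, X i ω * fz z (SS X Finset.univ ω) ∂μ) := by
    rw [Finset.sum_sub_distrib, ← Finset.sum_mul]; ring
  rw [e1, e4]
  have b1 : |(1 - ∑ i, ∫ ω, X i ω ^ 2 ∂μ) * G| ≤ δ * (16 * Real.exp (-z / 2)) := by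
    rw [abs_mul]
    refine mul_le_mul ?_ (h.ble z _ (fz'_le hz)) (abs_nonneg _) hs.pos.le
    rw [abs_of_nonneg (by linarith [h.var])]
    linarith [hs.var]
  have b2 : |∑ i, ((∫ ω, X i ω ^ 2 ∂μ) * G - ∫ ω, X i ω * fz z (SS X Finset.univ ω) ∂μ)| ≤
      Real.exp (-z / 2) * (220 * (∑ i, ∫ ω, X i ω ^ 2 * min |X i ω| 1 ∂μ + δ * ∑ i, ∫ ω, X i ω ^ 2 ∂μ)
        + 16 * ∑ i, (-∫ ω, X i ω ∂μ)) := by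
    refine (Finset.abs_sum_le_sum_abs _ _).trans ?_
    refine (Finset.sum_le_sum fun i _ => h.term hs hz i).trans (le_of_eq ?_)
    rw [← Finset.mul_sum, Finset.sum_add_distrib, ← Finset.mul_sum, ← Finset.mul_sum,
      Finset.sum_add_distrib, ← Finset.mul_sum]
  have b3 : 220 * (∑ i, ∫ ω, X i ω ^ 2 * min |X i ω| 1 ∂μ + δ * ∑ i, ∫ ω, X i ω ^ 2 ∂μ)
        + 16 * ∑ i, (-∫ ω, X i ω ∂μ) ≤ 456 * δ := by
    have := hs.third
    have := hs.mean
    have := mul_le_mul_of_nonneg_left h.var hs.pos.le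
    linarith
  have b4 := mul_le_mul_of_nonneg_left b3 hE.le
  refine (abs_add_le _ _).trans ?_
  linarith

lemma Good.trivial (h : Good μ X) {z : ℝ} (hz : 2 < z) :
    |(μ {ω | SS X Finset.univ ω ≤ z}).toReal - Phi z| ≤ Real.exp (-z / 2) := by
  have hmeas : MeasurableSet {ω | SS X Finset.univ ω ≤ z} :=
    measurableSet_le (h.ssmeas _) measurable_const
  have hindi : Integrable (fun ω => Set.indicator {ω | SS X Finset.univ ω ≤ z} (1 : Ω → ℝ) ω) μ :=
    (integrable_const (1 : ℝ)).indicator hmeas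
  have h1 : 1 - (μ {ω | SS X Finset.univ ω ≤ z}).toReal ≤ Real.exp (-z / 2) := by
    have e2 : (μ {ω | SS X Finset.univ ω ≤ z}).toReal =
        ∫ ω, Set.indicator {ω | SS X Finset.univ ω ≤ z} 1 ω ∂μ := by
      rw [integral_indicator_one hmeas]; rfl
    have e3 : (1 : ℝ) = ∫ _, (1 : ℝ) ∂μ := by simp
    rw [e2]
    nth_rewrite 1 [e3]
    rw [← integral_sub (integrable_const _) hindi]
    calc _ ≤ ∫ ω, Real.exp (-z) * Real.exp (SS X Finset.univ ω) ∂μ := by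
          refine integral_mono ((integrable_const _).sub hindi)
            ((h.expint _).const_mul _) fun ω => ?_
          simp only [Set.indicator, Set.mem_ofPred_eq, Pi.one_apply]
          rw [← Real.exp_add]
          split_ifs with hc
          · simp [Real.exp_nonneg]
          · push Not at hc
            rw [sub_zero]
            exact Real.one_le_exp (by linarith)
      _ ≤ Real.exp (-z) * Real.exp 1 := by
          rw [integral_const_mul]
          exact mul_le_mul_of_nonneg_left (h.mgf_le _) (Real.exp_nonneg _)
      _ ≤ _ := by
          rw [← Real.exp_add]
          exact Real.exp_le_exp.2 (by linarith)
  have h2 : (μ {ω | SS X Finset.univ ω ≤ z}).toReal ≤ 1 := by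
    have := prob_le_one (μ := μ) (s := {ω | SS X Finset.univ ω ≤ z})
    exact ENNReal.toReal_le_of_le_ofReal zero_le_one (by simpa using this)
  have h3 := tail_le' hz
  have h4 := exp_neg_le hz
  have h5 := Phi_le_one z
  have h6 := Real.exp_pos (-z)
  rw [abs_le]
  constructor <;> linarith

end main

/-! ## The truncated variables -/

section final

variable {Ω : Type*} [MeasureSpace Ω] [IsProbabilityMeasure (ℙ : Measure Ω)] {n : ℕ}
  {ξ : Fin n → Ω → ℝ}

lemma xbar_meas (hmeas : ∀ i, Measurable (ξ i)) (i : Fin n) : Measurable (xbar ξ i) := by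
  unfold xbar
  exact Measurable.ite (measurableSet_le (hmeas i) measurable_const) (hmeas i) measurable_const

lemma b2_int (hmeas : ∀ i, Measurable (ξ i)) (hL2 : ∀ i, MemLp (ξ i) 2 ℙ) (i : Fin n) :
    Integrable (fun ω => if 1 < |ξ i ω| then (ξ i ω) ^ 2 else 0) := by
  refine (hL2 i).integrable_sq.mono' ?_ (Filter.Eventually.of_forall fun ω => ?_)
  · have := hmeas i
    exact (Measurable.ite (measurableSet_lt measurable_const (by fun_prop)) (by fun_prop)
      measurable_const).aestronglyMeasurable
  · split_ifs
    · simp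
    · simp [sq_nonneg]

lemma b3_int (hmeas : ∀ i, Measurable (ξ i)) (i : Fin n) :
    Integrable (fun ω => if |ξ i ω| ≤ 1 then |ξ i ω| ^ 3 else 0) := by
  refine Integrable.of_bound (C := 1) ?_ (Filter.Eventually.of_forall fun ω => ?_)
  · have := hmeas i
    exact (Measurable.ite (measurableSet_le (by fun_prop) measurable_const) (by fun_prop)
      measurable_const).aestronglyMeasurable
  · split_ifs with h
    · rw [Real.norm_eq_abs, abs_of_nonneg (by positivity)]
      exact pow_le_one₀ (abs_nonneg _) h
    · simp

lemma xbar_good (hmeas : ∀ i, Measurable (ξ i)) (hindep : iIndepFun ξ ℙ)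
    (hL2 : ∀ i, MemLp (ξ i) 2 ℙ) (hmean : ∀ i, ∫ ω, ξ i ω = 0)
    (hvar : ∑ i, ∫ ω, (ξ i ω) ^ 2 = 1) : Good (ℙ : Measure Ω) (xbar ξ) := by
  have hl2 : ∀ i, MemLp (xbar ξ i) 2 ℙ := fun i => by
    refine (hL2 i).of_le (xbar_meas hmeas i).aestronglyMeasurable (Filter.Eventually.of_forall fun ω => ?_)
    unfold xbar
    split_ifs <;> simp
  refine ⟨xbar_meas hmeas, ?_, ?_, hl2, ?_, ?_⟩
  · have := hindep.comp (fun _ x => if x ≤ 1 then x else (0 : ℝ)) fun _ =>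
      Measurable.ite measurableSet_Iic measurable_id measurable_const
    exact this
  · intro i ω
    unfold xbar
    split_ifs with h
    · exact h
    · exact zero_le_one
  · intro i
    rw [← hmean i]
    refine integral_mono ((hl2 i).integrable (by norm_num)) ((hL2 i).integrable (by norm_num)) fun ω => ?_
    simp only [xbar]
    split_ifs with h
    · exact le_rfl
    · linarith
  · rw [← hvar]
    refine Finset.sum_le_sum fun i _ => ?_
    refine integral_mono (hl2 i).integrable_sq (hL2 i).integrable_sq fun ω => ?_
    simp only [xbar]
    split_ifs with h
    · exact le_rfl
    · simp [sq_nonneg]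

lemma beta2_nonneg : 0 ≤ beta2 ξ :=
  Finset.sum_nonneg fun i _ => integral_nonneg fun ω => by
    simp only [Pi.zero_apply]; split_ifs <;> positivity

lemma beta3_nonneg : 0 ≤ beta3 ξ :=
  Finset.sum_nonneg fun i _ => integral_nonneg fun ω => by
    simp only [Pi.zero_apply]; split_ifs <;> positivity

lemma xbar_mean (hmeas : ∀ i, Measurable (ξ i)) (hL2 : ∀ i, MemLp (ξ i) 2 ℙ)
    (hmean : ∀ i, ∫ ω, ξ i ω = 0) (hg : Good (ℙ : Measure Ω) (xbar ξ)) :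
    ∑ j, -∫ ω, xbar ξ j ω ≤ beta2 ξ := by
  refine Finset.sum_le_sum fun i _ => ?_
  have h1 : Integrable (ξ i) := (hL2 i).integrable (by norm_num)
  have e : -∫ ω, xbar ξ i ω = ∫ ω, (ξ i ω - xbar ξ i ω) := by
    rw [integral_sub h1 (hg.int i), hmean i, zero_sub]
  rw [e]
  refine integral_mono (h1.sub (hg.int i)) (b2_int hmeas hL2 i) fun ω => ?_
  simp only [xbar]
  by_cases h : ξ i ω ≤ 1
  · rw [if_pos h, sub_self]; split_ifs <;> positivity
  · push Not at h
    rw [if_neg (not_le.2 h), if_pos (lt_of_lt_of_le h (le_abs_self _))]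
    nlinarith

lemma xbar_var (hmeas : ∀ i, Measurable (ξ i)) (hL2 : ∀ i, MemLp (ξ i) 2 ℙ)
    (hvar : ∑ i, ∫ ω, (ξ i ω) ^ 2 = 1) (hg : Good (ℙ : Measure Ω) (xbar ξ)) :
    1 - beta2 ξ ≤ ∑ j, ∫ ω, xbar ξ j ω ^ 2 := by
  rw [← hvar, sub_le_iff_le_add]
  unfold beta2
  rw [← Finset.sum_add_distrib]
  refine Finset.sum_le_sum fun i _ => ?_
  rw [← integral_add (hg.intsq i) (b2_int hmeas hL2 i)]
  refine integral_mono (hL2 i).integrable_sq ((hg.intsq i).add (b2_int hmeas hL2 i)) fun ω => ?_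
  simp only [xbar]
  by_cases h : ξ i ω ≤ 1
  · rw [if_pos h]
    have : 0 ≤ (if 1 < |ξ i ω| then (ξ i ω) ^ 2 else 0) := by split_ifs <;> positivity
    linarith
  · push Not at h
    rw [if_neg (not_le.2 h), if_pos (lt_of_lt_of_le h (le_abs_self _))]
    simp

lemma xbar_third (hmeas : ∀ i, Measurable (ξ i)) (hL2 : ∀ i, MemLp (ξ i) 2 ℙ)
    (hg : Good (ℙ : Measure Ω) (xbar ξ)) :
    ∑ j, ∫ ω, xbar ξ j ω ^ 2 * min |xbar ξ j ω| 1 ≤ beta2 ξ + beta3 ξ := by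
  unfold beta2 beta3
  rw [← Finset.sum_add_distrib]
  refine Finset.sum_le_sum fun i _ => ?_
  rw [← integral_add (b2_int hmeas hL2 i) (b3_int hmeas i)]
  refine integral_mono (hg.tint' i) ((b2_int hmeas hL2 i).add (b3_int hmeas i)) fun ω => ?_
  simp only [xbar]
  by_cases h1 : |ξ i ω| ≤ 1
  · rw [if_pos ((le_abs_self _).trans h1), if_neg (not_lt.2 h1), if_pos h1, zero_add, min_eq_left h1,
      ← sq_abs]
    exact le_of_eq (by ring)
  · rw [if_neg h1, add_zero]
    push Not at h1
    rw [if_pos h1]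
    by_cases h : ξ i ω ≤ 1
    · rw [if_pos h, min_eq_right h1.le, mul_one]
    · rw [if_neg h]; simp [sq_nonneg]

end final

/-- Non-uniform bound for the truncated sum, inequality (4.14). -/
theorem truncated_sum_bound
    {Ω : Type*} [MeasureSpace Ω] [IsProbabilityMeasure (ℙ : Measure Ω)]
    {n : ℕ} (ξ : Fin n → Ω → ℝ)
    (hmeas : ∀ i, Measurable (ξ i))
    (hindep : iIndepFun ξ ℙ)
    (hL2 : ∀ i, MemLp (ξ i) 2 ℙ)
    (hmean : ∀ i, ∫ ω, ξ i ω = 0)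
    (hvar : ∑ i, ∫ ω, (ξ i ω) ^ 2 = 1)
    (z : ℝ) (hz : 2 < z) :
    |(ℙ {ω | Wbar ξ ω ≤ z}).toReal - Phi z|
      ≤ 7115 * Real.exp (-z / 2) * (beta2 ξ + beta3 ξ) := by
  have hg := xbar_good hmeas hindep hL2 hmean hvar
  have hWS : ∀ ω, Wbar ξ ω = SS (xbar ξ) Finset.univ ω := fun ω => rfl
  have hE := Real.exp_pos (-z / 2)
  have h2 : 0 ≤ beta2 ξ := beta2_nonneg
  have h3 : 0 ≤ beta3 ξ := beta3_nonneg
  simp only [hWS]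
  by_cases hb : 1 / 2000 ≤ beta2 ξ + beta3 ξ
  · refine (hg.trivial hz).trans ?_
    nlinarith
  · push Not at hb
    have key : ∀ η, 0 < η → η ≤ 1 / 2000 →
        |((ℙ : Measure Ω) {ω | SS (xbar ξ) Finset.univ ω ≤ z}).toReal - Phi z|
          ≤ 472 * Real.exp (-z / 2) * (beta2 ξ + beta3 ξ + η) := by
      intro η hη hη'
      refine hg.main (δ := beta2 ξ + beta3 ξ + η) ⟨by linarith, by linarith, ?_, ?_, ?_⟩ hz
      · linarith [xbar_mean hmeas hL2 hmean hg]
      · linarith [xbar_third hmeas hL2 hg]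
      · linarith [xbar_var hmeas hL2 hvar hg]
    have h5 : |((ℙ : Measure Ω) {ω | SS (xbar ξ) Finset.univ ω ≤ z}).toReal - Phi z|
          ≤ 472 * Real.exp (-z / 2) * (beta2 ξ + beta3 ξ) := by
      refine le_of_forall_pos_le_add fun ε hε => ?_
      have hc : 0 < 472 * Real.exp (-z / 2) := by positivity
      refine (key (min (1 / 2000) (ε / (472 * Real.exp (-z / 2)))) (by positivity) (min_le_left _ _)).trans ?_
      rw [mul_add]
      refine add_le_add_right ?_ _
      calc _ ≤ 472 * Real.exp (-z / 2) * (ε / (472 * Real.exp (-z / 2))) :=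
            mul_le_mul_of_nonneg_left (min_le_right _ _) hc.le
        _ = ε := by field_simp
    refine h5.trans ?_
    have := mul_nonneg hE.le (add_nonneg h2 h3)
    nlinarith
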